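/- arXiv:0812.1219 — 2 statements merged into one kernel-verified Lean document; each statement's English description precedes it below -/
import Mathlib

section
/- Let n and n^l both lie in ℤ₊^{m₁+1}(•) × ℤ₊^{m₂+1}(•), let A,B ∈ ℝ, and suppose G_{n,j} = A·A_{n,j} + B·A_{n^l,j} is not identically zero for some j ∈ {0,…,m₁}. If j ≤ l₁, then G_{n,j} has at most N_{1,j} zeros, counting multiplicities, on any real interval disjoint from Δ¹_{j+1} (Δ¹_{m₁+1} = ∅); if j > l₁, then G_{n,j} has at most N_{1,j} − 1 zeros, counting multiplicities, on any real interval disjoint from Δ¹_{j+1}. Here N_{1,j} = n_{1,j} + … + n_{1,m₁}. -/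
open MeasureTheory Polynomial Set Filter

noncomputable section

/-- The support of a Borel measure on `ℝ`: points all of whose open neighborhoods
have positive measure. -/
def msupport (μ : Measure ℝ) : Set ℝ :=
  {x : ℝ | ∀ U : Set ℝ, IsOpen U → x ∈ U → μ U ≠ 0}

/-- The copy of a real set inside `ℂ`. -/
def cpx (s : Set ℝ) : Set ℂ := (fun x : ℝ => (x : ℂ)) '' s

/-- `nikhat μ e j g` is the Cauchy transform of the measure `⟨σ_j, …, σ_{j+g}⟩`,
where `σ_i = (e i) • (μ i)` is a measure of constant sign. -/
def nikhat (μ : ℕ → Measure ℝ) (e : ℕ → ℝ) : ℕ → ℕ → ℂ → ℂ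
  | j, 0, z => (e j : ℂ) * ∫ t, 1 / (z - (t : ℂ)) ∂(μ j)
  | j, g + 1, z => (e j : ℂ) * ∫ t, nikhat μ e (j + 1) g (t : ℂ) / (z - (t : ℂ)) ∂(μ j)

/-- The Cauchy transform `ŝ_{j+1,k}` of `s_{j+1,k} = ⟨σ_{j+1},…,σ_k⟩`, with the
convention that it is `≡ 1` when `k ≤ j`. -/
def wt (μ : ℕ → Measure ℝ) (e : ℕ → ℝ) (j k : ℕ) (z : ℂ) : ℂ :=
  if j < k then nikhat μ e (j + 1) (k - (j + 1)) z else 1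

/-- Integral of `f` against the measure `s_{j,k} = ⟨σ_j, …, σ_k⟩`
(whose density with respect to `σ_j` is `ŝ_{j+1,k}`). -/
def sInt (μ : ℕ → Measure ℝ) (e : ℕ → ℝ) (j k : ℕ) (f : ℝ → ℂ) : ℂ :=
  (e j : ℂ) * ∫ x, f x * wt μ e j k (x : ℂ) ∂(μ j)

/-- The linear form `𝒜_{n,j}(z) = ∑_{k=j}^{m₁} a_k(z) ŝ¹_{j+1,k}(z)`. -/
def linForm (μ : ℕ → Measure ℝ) (e : ℕ → ℝ) (m₁ j : ℕ) (A : ℕ → Polynomial ℝ)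
    (z : ℂ) : ℂ :=
  ∑ k ∈ Finset.Icc j m₁, Polynomial.aeval z (A k) * wt μ e j k z

/-- The linear forms with negative index:
`𝒜_{n,-j-1}(z) = ∫ 𝒜_{n,-j}(x) dσ²_j(x) / (z - x)`. -/
def linFormNeg (μ : ℕ → Measure ℝ) (e : ℕ → ℝ) (F : ℂ → ℂ) : ℕ → ℂ → ℂ
  | 0 => F
  | j + 1 => fun z => (e j : ℂ) * ∫ x, linFormNeg μ e F j (x : ℂ) / (z - (x : ℂ)) ∂(μ j)

/-- A Nikishin system `N(σ_0,…,σ_m)` of measures of constant sign `σ_j = (e j) • (μ j)`,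
with `Co(supp σ_j) = Δ_j = [a j, b j]` and `Δ_j ∩ Δ_{j+1} = ∅`. -/
structure NikSys (m : ℕ) where
  μ : ℕ → Measure ℝ
  e : ℕ → ℝ
  a : ℕ → ℝ
  b : ℕ → ℝ
  fin : ∀ j, IsFiniteMeasure (μ j)
  sgn : ∀ j, e j = 1 ∨ e j = -1
  hull : ∀ j ≤ m, convexHull ℝ (msupport (μ j)) = Set.Icc (a j) (b j)
  inf : ∀ j ≤ m, (msupport (μ j)).Infinite
  disj : ∀ j < m, Set.Icc (a j) (b j) ∩ Set.Icc (a (j + 1)) (b (j + 1)) = ∅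

/-- Decreasing multi-index (the class `ℤ₊^{m+1}(•)`). -/
def Decr (m : ℕ) (n : ℕ → ℕ) : Prop := ∀ j < m, n (j + 1) ≤ n j

/-- `|n| = n_0 + ⋯ + n_m`. -/
def msum (m : ℕ) (n : ℕ → ℕ) : ℕ := ∑ j ∈ Finset.range (m + 1), n j

/-- `N_{1,j} = n_j + ⋯ + n_m` (partial tail sums). -/
def tailSum (m : ℕ) (n : ℕ → ℕ) (j : ℕ) : ℕ := ∑ k ∈ Finset.Icc j m, n k

/-- Mixed type multiple orthogonal polynomials relative to `(n1;n2)` and `(S1,S2)`. -/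
def IsMOP (m₁ m₂ : ℕ) (S1 : NikSys m₁) (S2 : NikSys m₂)
    (n1 n2 : ℕ → ℕ) (A : ℕ → Polynomial ℝ) : Prop :=
  (∀ j ≤ m₁, (A j).degree < (n1 j : WithBot ℕ)) ∧
  (∃ j ≤ m₁, A j ≠ 0) ∧
  ∀ k ≤ m₂, ∀ ν < n2 k,
    sInt S2.μ S2.e 0 k (fun x => (x : ℂ) ^ ν * linForm S1.μ S1.e m₁ 0 A (x : ℂ)) = 0

/-- The "monic" normalization: the last entry different from zero has leading
coefficient `1`. -/
def MonicLast (m₁ : ℕ) (A : ℕ → Polynomial ℝ) : Prop :=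
  ∃ j ≤ m₁, (A j).Monic ∧ ∀ k, j < k → k ≤ m₁ → A k = 0

/-- `n^l`: increase the `l`-th component by one. -/
def bump (l : ℕ) (n : ℕ → ℕ) : ℕ → ℕ := fun j => if j = l then n j + 1 else n j


/-- `f` has at most `N` zeros, counting multiplicities, on `D ⊆ ℂ`
(multiplicities measured through vanishing of iterated derivatives). -/
def CZerosLE (f : ℂ → ℂ) (D : Set ℂ) (N : ℕ) : Prop :=
  ∀ (S : Finset ℂ) (ord : ℂ → ℕ), ↑S ⊆ D →
    (∀ x ∈ S, ∀ i < ord x, iteratedDeriv i f x = 0) → ∑ x ∈ S, ord x ≤ N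

/-- `f` has fewer than `N` zeros, counting multiplicities, on `D ⊆ ℂ`. -/
def CZerosLT (f : ℂ → ℂ) (D : Set ℂ) (N : ℕ) : Prop :=
  ∀ (S : Finset ℂ) (ord : ℂ → ℕ), ↑S ⊆ D →
    (∀ x ∈ S, ∀ i < ord x, iteratedDeriv i f x = 0) → ∑ x ∈ S, ord x < N


section helpers

open scoped Topology

lemma aux_compl_null {m : ℕ} (S : NikSys m) (j : ℕ) (hj : j ≤ m) :
    (S.μ j) (Set.Icc (S.a j) (S.b j))ᶜ = 0 := by
  have h1 : (S.μ j).support ⊆ msupport (S.μ j) := by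
    intro x hx U hU hxU
    exact ((Measure.mem_support_iff_forall x).1 hx U (hU.mem_nhds hxU)).ne'
  have h2 : msupport (S.μ j) ⊆ Set.Icc (S.a j) (S.b j) := by
    rw [← S.hull j hj]; exact subset_convexHull ℝ _
  exact measure_mono_null (Set.compl_subset_compl.2 (h1.trans h2)) Measure.measure_compl_support

lemma aux_integrable {E : Type*} [NormedAddCommGroup E] [NormedSpace ℝ E] {μ : Measure ℝ}
    [IsFiniteMeasure μ] {a b : ℝ}
    (hμ : μ (Set.Icc a b)ᶜ = 0) {φ : ℝ → E} (hφ : ContinuousOn φ (Set.Icc a b)) :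
    Integrable φ μ := by
  have h := hφ.integrableOn_compact (μ := μ) isCompact_Icc
  rwa [IntegrableOn, Measure.restrict_eq_self_of_ae_mem] at h
  exact hμ

lemma aux_isOpen (a b : ℝ) : IsOpen (cpx (Set.Icc a b))ᶜ := by
  rw [isOpen_compl_iff]
  exact (isCompact_Icc.image Complex.continuous_ofReal).isClosed

lemma aux_sub_ne {a b : ℝ} {z : ℂ} (hz : z ∈ (cpx (Set.Icc a b))ᶜ) {t : ℝ}
    (ht : t ∈ Set.Icc a b) : z - (t : ℂ) ≠ 0 := by
  intro h
  exact hz ⟨t, ht, (sub_eq_zero.1 h).symm⟩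

lemma aux_contdiv {a b : ℝ} {z : ℂ} (hz : z ∈ (cpx (Set.Icc a b))ᶜ) {φ : ℝ → ℂ}
    (hφ : ContinuousOn φ (Set.Icc a b)) :
    ContinuousOn (fun t : ℝ => φ t / (z - (t : ℂ))) (Set.Icc a b) := by
  refine hφ.div ?_ (fun t ht => aux_sub_ne hz ht)
  exact (continuous_const.sub Complex.continuous_ofReal).continuousOn

lemma aux_cauchy_diff {μ : Measure ℝ} [IsFiniteMeasure μ] {a b : ℝ}
    (hμ : μ (Set.Icc a b)ᶜ = 0) {φ : ℝ → ℂ} (hφ : ContinuousOn φ (Set.Icc a b)) :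
    DifferentiableOn ℂ (fun z : ℂ => ∫ t, φ t / (z - (t : ℂ)) ∂μ) (cpx (Set.Icc a b))ᶜ := by
  intro z hz
  obtain ⟨ε, hε, hball⟩ := Metric.isOpen_iff.1 (aux_isOpen a b) z hz
  have hae : ∀ᵐ t ∂μ, t ∈ Set.Icc a b := hμ
  have hlow : ∀ t ∈ Set.Icc a b, ∀ w ∈ Metric.ball z (ε/2), ε/2 ≤ ‖w - (t:ℂ)‖ := by
    intro t ht w hw
    have h1 : (t:ℂ) ∉ Metric.ball z ε := fun h => hball h ⟨t, ht, rfl⟩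
    rw [Metric.mem_ball, not_lt, dist_eq_norm] at h1
    rw [Metric.mem_ball, dist_eq_norm] at hw
    have : ‖(t:ℂ) - z‖ ≤ ‖w - (t:ℂ)‖ + ‖w - z‖ := by
      calc ‖(t:ℂ) - z‖ = ‖(w - z) - (w - (t:ℂ))‖ := by congr 1; ring
        _ ≤ _ := by rw [add_comm]; exact norm_sub_le _ _
    linarith
  have hsub : Metric.ball z (ε/2) ⊆ (cpx (Set.Icc a b))ᶜ :=
    (Metric.ball_subset_ball (by linarith)).trans hball
  have key := hasDerivAt_integral_of_dominated_loc_of_deriv_le (μ := μ) (𝕜 := ℂ)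
    (F := fun (w : ℂ) (t : ℝ) => φ t / (w - (t : ℂ))) (x₀ := z)
    (F' := fun (w : ℂ) (t : ℝ) => - φ t / (w - (t : ℂ))^2)
    (bound := fun t => ‖φ t‖ / (ε/2)^2) (s := Metric.ball z (ε/2))
    (Metric.ball_mem_nhds z (by linarith))
    (by
      filter_upwards [Metric.ball_mem_nhds z (half_pos hε)] with w hw
      exact (aux_integrable hμ (aux_contdiv (hsub hw) hφ)).aestronglyMeasurable)
    (aux_integrable hμ (aux_contdiv hz hφ))
    (by
      refine (aux_integrable hμ (ContinuousOn.div hφ.neg ?_ ?_)).aestronglyMeasurable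
      · exact ((continuous_const.sub Complex.continuous_ofReal).pow 2).continuousOn
      · intro t ht; exact pow_ne_zero 2 (aux_sub_ne hz ht))
    (by
      filter_upwards [hae] with t ht w hw
      rw [norm_div, norm_neg, norm_pow]
      have := hlow t ht w hw
      gcongr)
    (aux_integrable hμ (hφ.norm.div_const _))
    (by
      filter_upwards [hae] with t ht w hw
      have h := (((hasDerivAt_id w).sub_const (t:ℂ)).inv (aux_sub_ne (hsub hw) ht)).const_mul (φ t)
      refine h.congr_deriv ?_
      simp; ring)
  exact key.2.differentiableAt.differentiableWithinAt

lemma aux_wt_succ (μ : ℕ → Measure ℝ) (e : ℕ → ℝ) {j k : ℕ} (hjk : j < k) (z : ℂ) :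
    wt μ e j k z = ∫ t, ((e (j+1) : ℂ) * wt μ e (j+1) k (t:ℂ)) / (z - (t:ℂ)) ∂(μ (j+1)) := by
  simp_rw [mul_div_assoc]
  rw [integral_const_mul]
  obtain ⟨g, rfl⟩ := Nat.exists_eq_add_of_lt hjk
  rcases g with _ | g
  · simp [wt, nikhat]
  · have h1 : j < j + (g+1) + 1 := by omega
    have h2 : j + 1 < j + (g+1) + 1 := by omega
    have h3 : j + (g+1) + 1 - (j+1) = g + 1 := by omega
    have h4 : j + (g+1) + 1 - (j+1+1) = g := by omega
    simp only [wt, h1, h2, if_true, h3, h4, nikhat]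

lemma aux_disj {a b a' b' : ℝ} (h : Set.Icc a b ∩ Set.Icc a' b' = ∅) {t : ℝ}
    (ht : t ∈ Set.Icc a b) : (t:ℂ) ∈ (cpx (Set.Icc a' b'))ᶜ := by
  rintro ⟨s, hs, hst⟩
  have : s = t := Complex.ofReal_injective hst
  subst this
  have : s ∈ Set.Icc a b ∩ Set.Icc a' b' := ⟨ht, hs⟩
  rw [h] at this; exact this

lemma aux_wt_diff {m : ℕ} (S : NikSys m) (g : ℕ) : ∀ j k : ℕ, j + g = k → k ≤ m →
    DifferentiableOn ℂ (wt S.μ S.e j k)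
      (if j < m then (cpx (Set.Icc (S.a (j+1)) (S.b (j+1))))ᶜ else Set.univ) := by
  induction g with
  | zero =>
    intro j k hjk hk
    have : wt S.μ S.e j k = fun _ => 1 := by
      funext z; simp [wt, show ¬ j < k by omega]
    rw [this]; exact differentiableOn_const _
  | succ g ih =>
    intro j k hjk hk
    have hj : j < m := by omega
    rw [if_pos hj]
    have h1 : wt S.μ S.e j k = fun z => ∫ t, ((S.e (j+1) : ℂ) * wt S.μ S.e (j+1) k (t:ℂ)) /
        (z - (t:ℂ)) ∂(S.μ (j+1)) := by
      funext z; exact aux_wt_succ _ _ (by omega) z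
    rw [h1]
    have := S.fin (j+1)
    refine aux_cauchy_diff (aux_compl_null S (j+1) (by omega)) ?_
    refine continuousOn_const.mul ?_
    refine (ih (j+1) k (by omega) hk).continuousOn.comp Complex.continuous_ofReal.continuousOn ?_
    intro t ht
    split_ifs with h
    · exact aux_disj (S.disj (j+1) h) ht
    · trivial

lemma aux_wt_real (μ : ℕ → Measure ℝ) (e : ℕ → ℝ) (g : ℕ) : ∀ j k : ℕ, j + g = k → ∀ x : ℝ,
    ((wt μ e j k (x:ℂ)).re : ℂ) = wt μ e j k (x:ℂ) := by
  induction g with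
  | zero => intro j k hjk x; simp [wt, show ¬ j < k by omega]
  | succ g ih =>
    intro j k hjk x
    rw [aux_wt_succ _ _ (by omega)]
    have : (fun t : ℝ => ((e (j+1) : ℂ) * wt μ e (j+1) k (t:ℂ)) / ((x:ℂ) - (t:ℂ))) =
        fun t : ℝ => (((e (j+1)) * (wt μ e (j+1) k (t:ℂ)).re / (x - t) : ℝ) : ℂ) := by
      funext t
      rw [← ih (j+1) k (by omega) t]
      push_cast; simp
    rw [this]
    have h2 := integral_ofReal (𝕜 := ℂ) (μ := μ (j+1))
      (f := fun t : ℝ => (e (j+1)) * (wt μ e (j+1) k (t:ℂ)).re / (x - t))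
    rw [show (∫ t, (((e (j+1)) * (wt μ e (j+1) k (t:ℂ)).re / (x - t) : ℝ) : ℂ) ∂μ (j+1)) = _ from h2]
    exact congrArg _ (Complex.ofReal_re _)

lemma aux_poly_dvd (n : ℕ) : ∀ (T : ℂ[X]) (x : ℂ) (g : ℂ → ℂ), ContinuousAt g x →
    (∀ᶠ z in 𝓝 x, T.eval z = (z - x)^n * g z) → (X - C x)^n ∣ T := by
  induction n with
  | zero => intro T x g _ _; simp
  | succ n ih =>
    intro T x g hg hT
    have h0 : T.IsRoot x := by
      have := hT.self_of_nhds
      simpa using this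
    obtain ⟨T1, rfl⟩ := dvd_iff_isRoot.2 h0
    rw [pow_succ']
    refine mul_dvd_mul_left _ (ih T1 x g hg ?_)
    have hc : ContinuousAt (fun z => (z - x)^n * g z) x := by fun_prop
    refine (ContinuousAt.eventuallyEq_nhds_iff_eventuallyEq_nhdsNE
      (f := fun z => T1.eval z) T1.continuous.continuousAt hc).1 ?_
    filter_upwards [hT.filter_mono nhdsWithin_le_nhds, self_mem_nhdsWithin] with z hz hzx
    have hzx' : z - x ≠ 0 := sub_ne_zero.2 hzx
    simp only [eval_mul, eval_sub, eval_X, eval_C, pow_succ'] at hz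
    rw [mul_assoc] at hz
    exact mul_left_cancel₀ hzx' hz

lemma aux_sign (S : Finset ℝ) (a b : ℝ) : ∀ f : ℝ → ℝ,
    (∀ x ∈ Set.Icc a b, ∀ y ∈ Set.Icc a b, x < y → f x * f y < 0 → ∃ s ∈ S, x < s ∧ s < y) →
    ∃ Q : ℝ[X], Q.natDegree ≤ S.card ∧ Q ≠ 0 ∧ ∀ x ∈ Set.Icc a b, 0 ≤ Q.eval x * f x := by
  induction S using Finset.induction_on with
  | empty =>
    intro f hf
    by_cases h : ∃ x ∈ Set.Icc a b, f x < 0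
    · obtain ⟨x, hx, hfx⟩ := h
      refine ⟨-1, by simp, by simp, ?_⟩
      intro y hy
      by_contra hcon
      have hfy : 0 < f y := by simpa using hcon
      have hxy : f x * f y < 0 := mul_neg_of_neg_of_pos hfx hfy
      rcases lt_trichotomy x y with h | h | h
      · obtain ⟨s, hs, _⟩ := hf x hx y hy h hxy; simp at hs
      · subst h; linarith
      · obtain ⟨s, hs, _⟩ := hf y hy x hx h (by linarith [mul_comm (f x) (f y)]); simp at hs
    · push Not at h
      exact ⟨1, by simp, by simp, fun x hx => by simpa using h x hx⟩
  | insert s S' hs ih =>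
    intro f hf
    by_cases hP : ∀ x ∈ Set.Icc a b, ∀ y ∈ Set.Icc a b, x < y → f x * f y < 0 →
        ∃ s ∈ S', x < s ∧ s < y
    · obtain ⟨Q, h1, h2⟩ := ih f hP
      exact ⟨Q, h1.trans (Finset.card_le_card (Finset.subset_insert _ _)), h2⟩
    · push Not at hP
      obtain ⟨x, hx, y, hy, hxy, hfxy, hno⟩ := hP
      -- any other sign change passes through s
      have hthru : ∀ x ∈ Set.Icc a b, ∀ y ∈ Set.Icc a b, x < y → f x * f y < 0 →
          (∀ r ∈ S', x < r → y ≤ r) → x < s ∧ s < y := by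
        intro x hx y hy hxy h hn
        obtain ⟨r, hr, h1, h2⟩ := hf x hx y hy hxy h
        rcases Finset.mem_insert.1 hr with rfl | hr
        · exact ⟨h1, h2⟩
        · exact absurd (hn r hr h1) (not_le.2 h2)
      obtain ⟨hxs, hsy⟩ := hthru x hx y hy hxy hfxy hno
      obtain ⟨Q, h1, h2, h3⟩ := ih (fun t => (t - s) * f t) (by
        intro x' hx' y' hy' hxy' hneg
        by_contra hcon
        push Not at hcon
        have hnz : f x' ≠ 0 ∧ f y' ≠ 0 ∧ x' - s ≠ 0 ∧ y' - s ≠ 0 := by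
          refine ⟨?_, ?_, ?_, ?_⟩ <;> intro h <;> simp [h] at hneg
        have hxs' : x' < s ∧ s < y' := by
          by_contra hc
          have hpos : 0 < (x' - s) * (y' - s) := by
            by_cases hh : x' < s
            · have : y' - s < 0 := lt_of_le_of_ne (by
                have := fun h => hc ⟨hh, h⟩
                linarith [not_lt.1 this]) hnz.2.2.2
              exact mul_pos_of_neg_of_neg (by linarith) this
            · have : 0 < x' - s := lt_of_le_of_ne (by linarith [not_lt.1 hh]) hnz.2.2.1.symm
              exact mul_pos this (by linarith)
          have : f x' * f y' < 0 := by
            by_contra h; push Not at h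
            nlinarith [mul_nonneg hpos.le h]
          exact hc (hthru x' hx' y' hy' hxy' this hcon)
        have hff : 0 < f x' * f y' := by
          have h1 : (x' - s) * (y' - s) < 0 :=
            mul_neg_of_neg_of_pos (by linarith [hxs'.1]) (by linarith [hxs'.2])
          by_contra h; push Not at h
          nlinarith [mul_nonneg_of_nonpos_of_nonpos h1.le h]
        have hnos : ∀ p ∈ Set.Icc a b, ∀ q ∈ Set.Icc a b, p < q →
            (s ≤ p ∨ q ≤ s) → (∀ r ∈ S', p < r → q ≤ r) → 0 ≤ f p * f q := by
          intro p hp q hq hpq hsd hn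
          by_contra h; push Not at h
          obtain ⟨g1, g2⟩ := hthru p hp q hq hpq h hn
          rcases hsd with h | h <;> linarith
        have hA : 0 ≤ f x * f x' := by
          rcases lt_trichotomy x x' with h | h | h
          · refine hnos x hx x' hx' h (Or.inr hxs'.1.le) ?_
            intro r hr hxr; linarith [hno r hr hxr, hxs'.1]
          · rw [h]; exact mul_self_nonneg _
          · rw [mul_comm]
            refine hnos x' hx' x hx h (Or.inr hxs.le) ?_
            intro r hr hxr; linarith [hcon r hr hxr, hxs'.2]
        have hB : 0 ≤ f y * f y' := by
          rcases lt_trichotomy y y' with h | h | h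
          · refine hnos y hy y' hy' h (Or.inl hsy.le) ?_
            intro r hr hxr; exact hcon r hr (by linarith [hxs'.1])
          · rw [h]; exact mul_self_nonneg _
          · rw [mul_comm]
            refine hnos y' hy' y hy h (Or.inl hxs'.2.le) ?_
            intro r hr hxr; exact hno r hr (by linarith)
        have := mul_nonneg hA hB
        have : 0 ≤ (f x * f y) * (f x' * f y') := by linarith
        linarith [mul_neg_of_neg_of_pos hfxy hff])
      refine ⟨Q * (X - C s), ?_, mul_ne_zero h2 (X_sub_C_ne_zero s), ?_⟩
      · rw [natDegree_mul h2 (X_sub_C_ne_zero s), natDegree_X_sub_C, Finset.card_insert_of_notMem hs]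
        omega
      · intro x hx
        have := h3 x hx
        simp only [eval_mul, eval_sub, eval_X, eval_C]
        linarith

lemma aux_quot {μ : Measure ℝ} [IsFiniteMeasure μ] {a b : ℝ}
    (hμ : μ (Set.Icc a b)ᶜ = 0) {h : ℝ → ℂ} (hh : ContinuousOn h (Set.Icc a b)) (N : ℕ) :
    ∀ P : ℂ[X], P.natDegree ≤ N → ∃ R : ℂ[X], (∀ i, N ≤ i → R.coeff i = 0) ∧
      (∀ i, N = i + 1 → R.coeff i = P.coeff N * ∫ t, h t ∂μ) ∧
      ∀ z ∈ (cpx (Set.Icc a b))ᶜ, ∫ t, (P.eval (t:ℂ) * h t) / (z - (t:ℂ)) ∂μ =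
        P.eval z * (∫ t, h t / (z - (t:ℂ)) ∂μ) - R.eval z := by
  have hae : ∀ᵐ t ∂μ, t ∈ Set.Icc a b := hμ
  have hPc : ∀ P : ℂ[X], ContinuousOn (fun t : ℝ => P.eval (t:ℂ) * h t) (Set.Icc a b) := by
    intro P
    exact (P.continuous.comp Complex.continuous_ofReal).continuousOn.mul hh
  induction N with
  | zero =>
    intro P hP
    obtain ⟨c, rfl⟩ : ∃ c, P = C c := ⟨_, eq_C_of_natDegree_le_zero hP⟩
    refine ⟨0, by simp, by simp, ?_⟩
    intro z _
    simp [mul_div_assoc, integral_const_mul]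
  | succ N ih =>
    intro P hP
    obtain ⟨R, h1, h2, h3⟩ := ih P.divX (by rw [natDegree_divX_eq_natDegree_tsub_one]; omega)
    refine ⟨X * R + C (∫ t, P.divX.eval (t:ℂ) * h t ∂μ), ?_, ?_, ?_⟩
    · intro i hi
      obtain ⟨i, rfl⟩ : ∃ k, i = k + 1 := ⟨i - 1, by omega⟩
      rw [coeff_add, coeff_X_mul, coeff_C_of_ne_zero (by omega), h1 i (by omega), add_zero]
    · intro i hi
      have hi' : N = i := by omega
      subst hi'
      rcases N with _ | N
      · have hd : P.divX = C (P.coeff 1) := by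
          rw [eq_C_of_natDegree_le_zero (p := P.divX)
            (by rw [natDegree_divX_eq_natDegree_tsub_one]; omega), coeff_divX]
        rw [hd]
        simp [integral_const_mul]
      · rw [coeff_add, coeff_X_mul, coeff_C_of_ne_zero (by omega), h2 N rfl, add_zero, coeff_divX]
    · intro z hz
      have e1 : ∫ t, (P.eval (t:ℂ) * h t) / (z - (t:ℂ)) ∂μ =
          ∫ t, (z * ((P.divX.eval (t:ℂ) * h t) / (z - (t:ℂ))) - P.divX.eval (t:ℂ) * h t
            + P.coeff 0 * (h t / (z - (t:ℂ)))) ∂μ := by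
        refine integral_congr_ae ?_
        filter_upwards [hae] with t ht
        have hne := aux_sub_ne hz ht
        have : P.eval (t:ℂ) = P.divX.eval (t:ℂ) * t + P.coeff 0 := by
          conv_lhs => rw [← divX_mul_X_add P]
          simp
        rw [this]
        field_simp
        ring
      have i1 := aux_integrable hμ (hPc P.divX)
      have i2 := aux_integrable hμ (aux_contdiv hz (hPc P.divX))
      have i3 := aux_integrable hμ (aux_contdiv hz hh)
      have i4 : Integrable (fun t : ℝ => z * ((P.divX.eval (t:ℂ) * h t) / (z - (t:ℂ)))
          - P.divX.eval (t:ℂ) * h t) μ := (i2.const_mul z).sub i1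
      rw [e1, integral_add i4 (i3.const_mul _),
        integral_sub (i2.const_mul z) i1, integral_const_mul, integral_const_mul, h3 z hz]
      have : P.eval z = P.divX.eval z * z + P.coeff 0 := by
        conv_lhs => rw [← divX_mul_X_add P]
        simp
      rw [this]
      simp only [eval_add, eval_mul, eval_X, eval_C]
      ring

lemma aux_aeval (q : ℝ[X]) (z : ℂ) : aeval z q = (q.map (algebraMap ℝ ℂ)).eval z := by
  rw [aeval_def, eval₂_eq_eval_map]

lemma aux_eval_real (q : ℝ[X]) (t : ℝ) :
    (q.map (algebraMap ℝ ℂ)).eval (t:ℂ) = ((q.eval t : ℝ) : ℂ) := by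
  have := eval_map_apply (f := algebraMap ℝ ℂ) (p := q) t
  simpa using this

/-- The monic polynomial with prescribed zeros. -/
def auxW (S : Finset ℝ) (ord : ℝ → ℕ) : ℝ[X] := ∏ x ∈ S, (X - C x) ^ ord x

lemma auxW_monic (S : Finset ℝ) (ord : ℝ → ℕ) : (auxW S ord).Monic :=
  monic_prod_of_monic _ _ fun x _ => (monic_X_sub_C x).pow _

lemma auxW_deg (S : Finset ℝ) (ord : ℝ → ℕ) : (auxW S ord).natDegree = ∑ x ∈ S, ord x := by
  rw [auxW, natDegree_prod_of_monic _ _ fun x _ => (monic_X_sub_C x).pow _]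
  simp

lemma auxW_ne {S : Finset ℝ} (ord : ℝ → ℕ) {t : ℝ} (ht : t ∉ S) : (auxW S ord).eval t ≠ 0 := by
  rw [auxW, eval_prod, Finset.prod_ne_zero_iff]
  intro x hx
  rw [eval_pow, eval_sub, eval_X, eval_C]
  refine pow_ne_zero _ (sub_ne_zero.2 ?_)
  rintro rfl; exact ht hx

lemma auxW_map (S : Finset ℝ) (ord : ℝ → ℕ) : (auxW S ord).map (algebraMap ℝ ℂ) =
    ∏ x ∈ S, (X - C (x:ℂ)) ^ ord x := by
  rw [auxW, Polynomial.map_prod]; simp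

lemma auxW_dvd {S : Finset ℝ} {ord : ℝ → ℕ} {T : ℂ[X]}
    (h : ∀ x ∈ S, (X - C (x:ℂ)) ^ ord x ∣ T) : (auxW S ord).map (algebraMap ℝ ℂ) ∣ T := by
  rw [auxW_map]
  refine Finset.prod_dvd_of_coprime ?_ h
  intro x _ y _ hxy
  exact (pairwise_coprime_X_sub_C (s := fun x : ℝ => (x:ℂ)) Complex.ofReal_injective hxy).pow

lemma aux_fact {F : ℂ → ℂ} {x : ℂ} {n : ℕ} (hF : AnalyticAt ℂ F x)
    (h : ∀ i < n, iteratedDeriv i F x = 0) :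
    ∃ g : ℂ → ℂ, ContinuousAt g x ∧ ∀ᶠ z in 𝓝 x, F z = (z - x) ^ n * g z := by
  have h1 := (natCast_le_analyticOrderAt_iff_iteratedDeriv_eq_zero hF).2 h
  obtain ⟨g, hg, hgz⟩ := (natCast_le_analyticOrderAt hF).1 h1
  exact ⟨g, hg.continuousAt, by simpa using hgz⟩

lemma aux_orth {μ : Measure ℝ} [IsFiniteMeasure μ] {a b : ℝ}
    (hμ : μ (Set.Icc a b)ᶜ = 0) (K : Finset ℕ) (p0 : ℝ[X]) (p : ℕ → ℝ[X]) (w : ℕ → ℝ → ℂ)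
    (hw : ∀ k ∈ K, ContinuousOn (w k) (Set.Icc a b)) (F : ℂ → ℂ)
    (hF : ∀ z ∈ (cpx (Set.Icc a b))ᶜ, F z = aeval z p0 +
      ∑ k ∈ K, aeval z (p k) * ∫ t, w k t / (z - (t:ℂ)) ∂μ)
    (S : Finset ℝ) (ord : ℝ → ℕ) (hS : ∀ x ∈ S, x ∉ Set.Icc a b)
    (hz : ∀ x ∈ S, ∀ i < ord x, iteratedDeriv i F (x:ℂ) = 0)
    (Q : ℝ[X]) (N : ℕ) (hN : N + 1 = ∑ x ∈ S, ord x)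
    (h0 : ∀ i, N ≤ i → (Q * p0).coeff i = 0)
    (hk : ∀ k ∈ K, (Q * p k).natDegree ≤ N) :
    ∫ t, (((Q.eval t : ℝ) : ℂ) * ∑ k ∈ K, (((p k).eval t : ℝ) : ℂ) * w k t) /
      (((auxW S ord).eval t : ℝ) : ℂ) ∂μ = 0 := by
  have hae : ∀ᵐ t ∂μ, t ∈ Set.Icc a b := hμ
  set W := (auxW S ord).map (algebraMap ℝ ℂ) with hW
  set h : ℝ → ℂ := fun t => (((Q.eval t : ℝ) : ℂ) * ∑ k ∈ K, (((p k).eval t : ℝ) : ℂ) * w k t) /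
      (((auxW S ord).eval t : ℝ) : ℂ) with hh
  have hpc : ∀ q : ℝ[X], Continuous (fun t : ℝ => ((q.eval t : ℝ) : ℂ)) := fun q =>
    Complex.continuous_ofReal.comp q.continuous
  have hWne : ∀ t ∈ Set.Icc a b, (((auxW S ord).eval t : ℝ) : ℂ) ≠ 0 := by
    intro t ht
    exact_mod_cast auxW_ne ord (fun hts => hS t hts ht)
  have hhc : ContinuousOn h (Set.Icc a b) := by
    refine ContinuousOn.div ?_ (hpc _).continuousOn hWne
    refine (hpc Q).continuousOn.mul (continuousOn_finsetSum _ fun k hkK => ?_)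
    exact (hpc _).continuousOn.mul (hw k hkK)
  have hFd : DifferentiableOn ℂ F (cpx (Set.Icc a b))ᶜ := by
    refine DifferentiableOn.congr (f := fun z => aeval z p0 +
      ∑ k ∈ K, aeval z (p k) * ∫ t, w k t / (z - (t:ℂ)) ∂μ) ?_ hF
    simp only [aux_aeval]
    refine (Polynomial.differentiable _).differentiableOn.add ?_
    refine DifferentiableOn.fun_sum fun k hkK => ?_
    exact (Polynomial.differentiable _).differentiableOn.mul (aux_cauchy_diff hμ (hw k hkK))
  have hR : ∀ k : ℕ, ∃ R : ℂ[X], k ∈ K → (∀ i, N ≤ i → R.coeff i = 0) ∧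
      ∀ z ∈ (cpx (Set.Icc a b))ᶜ,
        ∫ t, (((Q * p k).map (algebraMap ℝ ℂ)).eval (t:ℂ) * w k t) / (z - (t:ℂ)) ∂μ =
        ((Q * p k).map (algebraMap ℝ ℂ)).eval z * (∫ t, w k t / (z - (t:ℂ)) ∂μ) - R.eval z := by
    intro k
    by_cases hkK : k ∈ K
    · obtain ⟨R, h1, _, h3⟩ := aux_quot hμ (hw k hkK) N ((Q * p k).map (algebraMap ℝ ℂ))
        ((natDegree_map_le).trans (hk k hkK))
      exact ⟨R, fun _ => ⟨h1, h3⟩⟩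
    · exact ⟨0, fun hh => absurd hh hkK⟩
  choose R hR using hR
  have hWdeg : W.natDegree = N + 1 := by
    rw [hW, (auxW_monic S ord).natDegree_map, auxW_deg, hN]
  have hWmon : W.Monic := (auxW_monic S ord).map _
  obtain ⟨RW, g1, g2, g3⟩ := aux_quot hμ hhc (N+1) W hWdeg.le
  set T : ℂ[X] := (Q * p0).map (algebraMap ℝ ℂ) + ∑ k ∈ K, R k - RW with hT
  -- the key identity
  have key : ∀ z ∈ (cpx (Set.Icc a b))ᶜ,
      T.eval z = (Q.map (algebraMap ℝ ℂ)).eval z * F z - W.eval z * ∫ t, h t / (z - (t:ℂ)) ∂μ := by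
    intro z hzc
    have e1 : ∫ t, (W.eval (t:ℂ) * h t) / (z - (t:ℂ)) ∂μ =
        ∑ k ∈ K, ∫ t, (((Q * p k).map (algebraMap ℝ ℂ)).eval (t:ℂ) * w k t) / (z - (t:ℂ)) ∂μ := by
      rw [← integral_finsetSum]
      · refine integral_congr_ae ?_
        filter_upwards [hae] with t ht
        rw [hW, aux_eval_real, hh]
        simp only
        rw [mul_div_cancel₀ _ (hWne t ht), Finset.mul_sum, Finset.sum_div]
        refine Finset.sum_congr rfl fun k _ => ?_
        rw [aux_eval_real, eval_mul]; push_cast; ring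
      · intro k hkK
        refine aux_integrable hμ (aux_contdiv hzc ?_)
        simp only [aux_eval_real]
        exact (hpc _).continuousOn.mul (hw k hkK)
    have e2 := g3 z hzc
    rw [e1, Finset.sum_congr rfl fun k hkK => (hR k hkK).2 z hzc, Finset.sum_sub_distrib] at e2
    rw [hF z hzc, hT]
    simp only [eval_sub, eval_add, eval_finsetSum, aux_aeval, Polynomial.map_mul, eval_mul] at e2 ⊢
    rw [mul_add, Finset.mul_sum]
    simp only [← mul_assoc]
    linear_combination -e2
  have hdvd : W ∣ T := by
    refine auxW_dvd fun x hx => ?_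
    have hxc : (x:ℂ) ∈ (cpx (Set.Icc a b))ᶜ := by
      rintro ⟨s, hs, hsx⟩
      have := Complex.ofReal_injective hsx
      subst this
      exact hS s hx hs
    have hnb := (aux_isOpen a b).mem_nhds hxc
    obtain ⟨g, hg, hgz⟩ := aux_fact (hFd.analyticAt hnb) (hz x hx)
    obtain ⟨V, hV⟩ : (X - C (x:ℂ)) ^ ord x ∣ W := by
      rw [hW, auxW_map]; exact Finset.dvd_prod_of_mem _ hx
    refine aux_poly_dvd (ord x) T x (fun z => (Q.map (algebraMap ℝ ℂ)).eval z * g z -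
      V.eval z * ∫ t, h t / (z - (t:ℂ)) ∂μ) ?_ ?_
    · have c1 := ((aux_cauchy_diff hμ hhc).differentiableAt hnb).continuousAt
      exact ((Polynomial.continuous _).continuousAt.mul hg).sub
        ((Polynomial.continuous _).continuousAt.mul c1)
    · filter_upwards [hgz, hnb] with z hz1 hz2
      rw [key z hz2, hz1, hV]
      simp only [eval_mul, eval_pow, eval_sub, eval_X, eval_C]
      ring
  have hTc : ∀ i, N + 1 ≤ i → T.coeff i = 0 := by
    intro i hi
    rw [hT, coeff_sub, coeff_add, finsetSum_coeff, coeff_map, h0 i (by omega), g1 i hi,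
      Finset.sum_eq_zero fun k hkK => (hR k hkK).1 i (by omega)]
    simp
  have hT0 : T = 0 := by
    refine eq_zero_of_dvd_of_degree_lt hdvd ?_
    rw [degree_eq_natDegree hWmon.ne_zero, hWdeg, degree_lt_iff_coeff_zero]
    exact fun m hm => hTc m hm
  have : T.coeff N = 0 := by rw [hT0]; simp
  rw [hT, coeff_sub, coeff_add, finsetSum_coeff, coeff_map, h0 N le_rfl, g2 N rfl,
      Finset.sum_eq_zero fun k hkK => (hR k hkK).1 N le_rfl, ← hWdeg, hWmon.coeff_natDegree] at this
  simpa using this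

lemma aux_Icc {j m : ℕ} (hj : j ≤ m) :
    Finset.Icc j m = insert j (Finset.Icc (j+1) m) := by
  ext k; simp only [Finset.mem_Icc, Finset.mem_insert]; omega

lemma aux_sum_Icc {M : Type*} [AddCommMonoid M] {j m : ℕ} (hj : j ≤ m) (f : ℕ → M) :
    ∑ k ∈ Finset.Icc j m, f k = f j + ∑ k ∈ Finset.Icc (j+1) m, f k := by
  rw [aux_Icc hj, Finset.sum_insert (by simp)]

lemma aux_linForm_succ {m j : ℕ} (hj : j ≤ m) (μ : ℕ → Measure ℝ) (e : ℕ → ℝ)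
    (p : ℕ → ℝ[X]) (z : ℂ) :
    linForm μ e m j p z = aeval z (p j) + ∑ k ∈ Finset.Icc (j+1) m, aeval z (p k) *
      ∫ t, ((e (j+1) : ℂ) * wt μ e (j+1) k (t:ℂ)) / (z - (t:ℂ)) ∂(μ (j+1)) := by
  rw [linForm, aux_sum_Icc hj]
  congr 1
  · simp [wt]
  · refine Finset.sum_congr rfl fun k hk => ?_
    rw [Finset.mem_Icc] at hk
    rw [aux_wt_succ _ _ (by omega)]

/-- The real trace of a linear form. -/
def auxG {m : ℕ} (S : NikSys m) (j : ℕ) (p : ℕ → ℝ[X]) (t : ℝ) : ℝ :=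
  (linForm S.μ S.e m j p (t:ℂ)).re

lemma auxG_eq {m : ℕ} (S : NikSys m) (j : ℕ) (p : ℕ → ℝ[X]) (t : ℝ) :
    ((auxG S j p t : ℝ) : ℂ) = linForm S.μ S.e m j p (t:ℂ) := by
  have : linForm S.μ S.e m j p (t:ℂ) = ((∑ k ∈ Finset.Icc j m, (p k).eval t *
      (wt S.μ S.e j k (t:ℂ)).re : ℝ) : ℂ) := by
    rw [linForm]
    push_cast
    refine Finset.sum_congr rfl fun k hk => ?_
    rw [Finset.mem_Icc] at hk
    rw [aux_wt_real _ _ (k - j) j k (by omega), aux_aeval, aux_eval_real]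
  rw [auxG, this, Complex.ofReal_re]

lemma aux_wt_cont {m : ℕ} (S : NikSys m) {j k : ℕ} (hk : j + 1 ≤ k) (hkm : k ≤ m) :
    ContinuousOn (fun t : ℝ => wt S.μ S.e (j+1) k (t:ℂ))
      (Set.Icc (S.a (j+1)) (S.b (j+1))) := by
  refine (aux_wt_diff S (k - (j+1)) (j+1) k (by omega) hkm).continuousOn.comp
    Complex.continuous_ofReal.continuousOn ?_
  intro t ht
  split_ifs with h
  · exact aux_disj (S.disj (j+1) h) ht
  · trivial

lemma auxG_cont {m : ℕ} (S : NikSys m) (j : ℕ) (p : ℕ → ℝ[X]) :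
    ContinuousOn (auxG S (j+1) p) (Set.Icc (S.a (j+1)) (S.b (j+1))) := by
  refine Complex.continuous_re.comp_continuousOn ?_
  simp only [linForm, aux_aeval]
  refine continuousOn_finsetSum _ fun k hk => ?_
  rw [Finset.mem_Icc] at hk
  exact ((Polynomial.continuous _).comp Complex.continuous_ofReal).continuousOn.mul
    (aux_wt_cont S hk.1 hk.2)

lemma aux_poly_case {q : ℝ[X]} (hq : q ≠ 0) (S : Finset ℝ) (ord : ℝ → ℕ)
    (hz : ∀ x ∈ S, ∀ i < ord x, iteratedDeriv i (fun z : ℂ => aeval z q) (x:ℂ) = 0) :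
    ∑ x ∈ S, ord x ≤ q.natDegree := by
  have hdvd : (auxW S ord).map (algebraMap ℝ ℂ) ∣ q.map (algebraMap ℝ ℂ) := by
    refine auxW_dvd fun x hx => ?_
    have han : AnalyticAt ℂ (fun z : ℂ => aeval z q) (x:ℂ) := by
      simp only [aux_aeval]
      exact (Polynomial.differentiable _).analyticAt _
    obtain ⟨g, hg, hgz⟩ := aux_fact han (hz x hx)
    refine aux_poly_dvd _ _ _ g hg ?_
    simpa only [aux_aeval] using hgz
  have hinj : Function.Injective (algebraMap ℝ ℂ) := (algebraMap ℝ ℂ).injective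
  have := natDegree_le_of_dvd hdvd ((Polynomial.map_ne_zero_iff hinj).2 hq)
  rwa [natDegree_map_eq_of_injective hinj, natDegree_map_eq_of_injective hinj, auxW_deg] at this

lemma aux_AT {m : ℕ} (S : NikSys m) (n : ℕ → ℕ) (hn : Decr m n) (g : ℕ) :
    ∀ j : ℕ, j + g = m → ∀ p : ℕ → ℝ[X],
      (∀ k, j ≤ k → k ≤ m → (p k).degree < (n k : WithBot ℕ)) →
      (∃ k, j ≤ k ∧ k ≤ m ∧ p k ≠ 0) → ∀ (Z : Finset ℝ) (ord : ℝ → ℕ),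
      (∀ x ∈ Z, j < m → x ∉ Set.Icc (S.a (j+1)) (S.b (j+1))) →
      (∀ x ∈ Z, ∀ i < ord x, iteratedDeriv i (linForm S.μ S.e m j p) (x:ℂ) = 0) →
      ∑ x ∈ Z, ord x < tailSum m n j := by
  have hnat : ∀ (q : ℝ[X]) (k : ℕ), q ≠ 0 → q.degree < (k : WithBot ℕ) → q.natDegree < k := by
    intro q k hq h
    exact (natDegree_lt_iff_degree_lt hq).2 h
  have hpoly : ∀ j : ℕ, j ≤ m → ∀ p : ℕ → ℝ[X],
      (∀ k, j ≤ k → k ≤ m → (p k).degree < (n k : WithBot ℕ)) →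
      (∃ k, j ≤ k ∧ k ≤ m ∧ p k ≠ 0) → (∀ k, j + 1 ≤ k → k ≤ m → p k = 0) →
      ∀ (Z : Finset ℝ) (ord : ℝ → ℕ),
      (∀ x ∈ Z, ∀ i < ord x, iteratedDeriv i (linForm S.μ S.e m j p) (x:ℂ) = 0) →
      ∑ x ∈ Z, ord x < tailSum m n j := by
    intro j hj p hp hne h0 Z ord hz
    obtain ⟨k, hk1, hk2, hk3⟩ := hne
    have hkj : k = j := by
      by_contra h
      exact hk3 (h0 k (by omega) hk2)
    subst hkj
    have hfun : linForm S.μ S.e m k p = fun z : ℂ => aeval z (p k) := by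
      funext z
      rw [linForm, aux_sum_Icc hj, Finset.sum_eq_zero, add_zero]
      · simp [wt]
      · intro i hi
        rw [Finset.mem_Icc] at hi
        simp [h0 i hi.1 hi.2]
    rw [hfun] at hz
    have h1 := aux_poly_case hk3 Z ord hz
    have h2 := hnat _ _ hk3 (hp k le_rfl hj)
    rw [tailSum, aux_sum_Icc hj]
    omega
  induction g with
  | zero =>
    intro j hj p hp hne Z ord _ hz
    exact hpoly j (by omega) p hp hne (fun k h1 h2 => by omega) Z ord hz
  | succ g ih =>
    intro j hj p hp hne Z ord hZ hz
    by_cases hall : ∀ k, j + 1 ≤ k → k ≤ m → p k = 0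
    · exact hpoly j (by omega) p hp hne hall Z ord hz
    push Not at hall
    have hjm : j < m := by omega
    have IH := ih (j+1) (by omega) p (fun k h1 h2 => hp k (by omega) h2) hall
    by_contra hcon
    rw [not_lt] at hcon
    set a := S.a (j+1)
    set b := S.b (j+1)
    have := S.fin (j+1)
    have hμ : (S.μ (j+1)) (Set.Icc a b)ᶜ = 0 := aux_compl_null S (j+1) (by omega)
    have hae : ∀ᵐ t ∂(S.μ (j+1)), t ∈ Set.Icc a b := hμ
    -- zeros of the next form
    set V : Set ℝ := {t | t ∈ Set.Icc a b ∧ auxG S (j+1) p t = 0} with hV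
    have hVcard : ∀ Y : Finset ℝ, (Y : Set ℝ) ⊆ V → Y.card < tailSum m n (j+1) := by
      intro Y hY
      have := IH Y (fun _ => 1) (fun x hx hlt hxin => by
          have hx' := (hY hx).1
          have : x ∈ Set.Icc (S.a (j+1)) (S.b (j+1)) ∩ Set.Icc (S.a (j+1+1)) (S.b (j+1+1)) :=
            ⟨hx', hxin⟩
          rw [S.disj (j+1) hlt] at this; exact this)
        (fun x hx i hi => by
          have hi0 : i = 0 := by omega
          subst hi0
          rw [iteratedDeriv_zero, ← auxG_eq, (hY hx).2]; simp)
      simpa using this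
    have hVfin : V.Finite := by
      by_contra hinf
      obtain ⟨Y, hY, hc⟩ := Set.Infinite.exists_subset_card_eq hinf (tailSum m n (j+1))
      have := hVcard Y hY
      omega
    set Y := hVfin.toFinset with hYdef
    have hYc : Y.card < tailSum m n (j+1) := hVcard Y (by simp [hYdef])
    have hZa : ∀ x ∈ Z, x ∉ Set.Icc a b := fun x hx => hZ x hx hjm
    have hWne : ∀ t ∈ Set.Icc a b, (auxW Z ord).eval t ≠ 0 := fun t ht =>
      auxW_ne ord (fun hts => hZa t hts ht)
    set f : ℝ → ℝ := fun t => auxG S (j+1) p t / (auxW Z ord).eval t with hf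
    have hfc : ContinuousOn f (Set.Icc a b) :=
      (auxG_cont S j p).div (Polynomial.continuous _).continuousOn hWne
    have hf0 : ∀ t ∈ Set.Icc a b, f t = 0 → t ∈ Y := by
      intro t ht h
      rw [hYdef, Set.Finite.mem_toFinset]
      refine ⟨ht, ?_⟩
      rcases div_eq_zero_iff.1 h with h | h
      · exact h
      · exact absurd h (hWne t ht)
    obtain ⟨Q, hQd, hQ0, hQ⟩ := aux_sign Y a b f (by
      intro x hx y hy hxy hneg
      have hsub : Set.Icc x y ⊆ Set.Icc a b := Set.Icc_subset_Icc hx.1 hy.2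
      have hfx : f x ≠ 0 := by intro h; simp [h] at hneg
      have hfy : f y ≠ 0 := by intro h; simp [h] at hneg
      have hex : ∃ s ∈ Set.Icc x y, f s = 0 := by
        rcases lt_or_gt_of_ne hfx with h | h
        · have h' : 0 < f y := by
            by_contra hc
            nlinarith [mul_nonneg_of_nonpos_of_nonpos h.le (not_lt.1 hc)]
          exact intermediate_value_Icc hxy.le (hfc.mono hsub) ⟨h.le, h'.le⟩
        · have h' : f y < 0 := by
            by_contra hc
            nlinarith [mul_nonneg h.le (not_lt.1 hc)]
          exact intermediate_value_Icc' hxy.le (hfc.mono hsub) ⟨h'.le, h.le⟩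
      obtain ⟨s, hs, hfs⟩ := hex
      refine ⟨s, hf0 s (hsub hs) hfs, lt_of_le_of_ne hs.1 ?_, lt_of_le_of_ne hs.2 ?_⟩
      · rintro rfl; exact hfx hfs
      · rintro rfl; exact hfy hfs)
    have htail : tailSum m n j = n j + tailSum m n (j+1) := aux_sum_Icc (by omega) n
    have hanti : ∀ i, j + i ≤ m → n (j+i) ≤ n j := by
      intro i
      induction i with
      | zero => intro _; exact le_rfl
      | succ i ihi => intro h; exact (hn (j+i) (by omega)).trans (ihi (by omega))
    have hdegk : ∀ k, j ≤ k → k ≤ m → Q * p k = 0 ∨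
        (Q * p k).natDegree + 2 ≤ ∑ x ∈ Z, ord x := by
      intro k hk1 hk2
      by_cases h0 : p k = 0
      · left; rw [h0, mul_zero]
      · right
        have h1 := hnat _ _ h0 (hp k hk1 hk2)
        have h2 := hanti (k - j) (by omega)
        rw [show j + (k - j) = k by omega] at h2
        rw [natDegree_mul hQ0 h0]
        omega
    have horth := aux_orth (μ := S.μ (j+1)) hμ (Finset.Icc (j+1) m) (p j) p
      (fun k t => (S.e (j+1) : ℂ) * wt S.μ S.e (j+1) k (t:ℂ))
      (fun k hk => by
        rw [Finset.mem_Icc] at hk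
        exact continuousOn_const.mul (aux_wt_cont S hk.1 hk.2))
      (linForm S.μ S.e m j p) (fun z _ => aux_linForm_succ (by omega) _ _ _ z)
      Z ord hZa hz Q (∑ x ∈ Z, ord x - 1) (by omega)
      (fun i hi => by
        rcases hdegk j le_rfl hjm.le with h | h
        · rw [h, coeff_zero]
        · exact coeff_eq_zero_of_natDegree_lt (by omega))
      (fun k hk => by
        rw [Finset.mem_Icc] at hk
        rcases hdegk k (by omega) hk.2 with h | h
        · rw [h]; simp
        · omega)
    have hint : ∫ t, Q.eval t * f t ∂(S.μ (j+1)) = 0 := by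
      have e1 : ∀ t : ℝ, (((Q.eval t : ℝ) : ℂ) * ∑ k ∈ Finset.Icc (j+1) m,
          (((p k).eval t : ℝ) : ℂ) * ((S.e (j+1) : ℂ) * wt S.μ S.e (j+1) k (t:ℂ))) /
          (((auxW Z ord).eval t : ℝ) : ℂ) = ((S.e (j+1) * (Q.eval t * f t) : ℝ) : ℂ) := by
        intro t
        rw [hf]
        push_cast
        rw [auxG_eq, linForm]
        have : ∑ k ∈ Finset.Icc (j+1) m,
          (((p k).eval t : ℝ) : ℂ) * ((S.e (j+1) : ℂ) * wt S.μ S.e (j+1) k (t:ℂ)) =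
          (S.e (j+1) : ℂ) * ∑ k ∈ Finset.Icc (j+1) m,
            aeval (t:ℂ) (p k) * wt S.μ S.e (j+1) k (t:ℂ) := by
          rw [Finset.mul_sum]
          refine Finset.sum_congr rfl fun k _ => ?_
          rw [aux_aeval, aux_eval_real]; ring
        rw [this]; ring
      have e2 : ∫ t, ((S.e (j+1) * (Q.eval t * f t) : ℝ) : ℂ) ∂(S.μ (j+1)) = 0 := by
        rw [← horth]; exact integral_congr_ae (Eventually.of_forall fun t => (e1 t).symm)
      have e3 := integral_ofReal (𝕜 := ℂ) (μ := S.μ (j+1))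
        (f := fun t : ℝ => S.e (j+1) * (Q.eval t * f t))
      have e4 : ((∫ t, S.e (j+1) * (Q.eval t * f t) ∂(S.μ (j+1)) : ℝ) : ℂ) = 0 := e3.symm.trans e2
      have e5 : ∫ t, S.e (j+1) * (Q.eval t * f t) ∂(S.μ (j+1)) = 0 := by exact_mod_cast e4
      rw [integral_const_mul] at e5
      rcases mul_eq_zero.1 e5 with h | h
      · rcases S.sgn (j+1) with h' | h' <;> rw [h'] at h <;> norm_num at h
      · exact h
    have hQfc : ContinuousOn (fun t => Q.eval t * f t) (Set.Icc a b) :=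
      Q.continuous.continuousOn.mul hfc
    have hzero := (integral_eq_zero_iff_of_nonneg_ae
      (by filter_upwards [hae] with t ht using hQ t ht) (aux_integrable hμ hQfc)).1 hint
    -- the product vanishes on the support
    have hsupp : ∀ t ∈ msupport (S.μ (j+1)), t ∈ Set.Icc a b ∧ Q.eval t * f t = 0 := by
      intro t ht
      have htab : t ∈ Set.Icc a b := by
        have : t ∈ convexHull ℝ (msupport (S.μ (j+1))) := subset_convexHull ℝ _ ht
        rwa [S.hull (j+1) (by omega)] at this
      refine ⟨htab, ?_⟩
      by_contra hne
      have hev := (hQfc t htab).eventually_ne hne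
      rw [eventually_nhdsWithin_iff] at hev
      obtain ⟨U, hU, hUo, htU⟩ := eventually_nhds_iff.1 hev
      refine ht U hUo htU ?_
      have hnull : ∀ᵐ s ∂(S.μ (j+1)), s ∉ U := by
        filter_upwards [hae, hzero] with s hs hs0 hsU
        exact hU s hsU hs hs0
      have := measure_eq_zero_iff_ae_notMem.2 hnull
      exact this
    refine S.inf (j+1) (by omega) (Set.Finite.subset
      ((Q.roots.toFinset ∪ Y).finite_toSet) ?_)
    intro t ht
    obtain ⟨h1, h2⟩ := hsupp t ht
    rw [Finset.mem_coe, Finset.mem_union]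
    rcases mul_eq_zero.1 h2 with h | h
    · left; rw [Multiset.mem_toFinset, mem_roots hQ0]; exact h
    · right; exact hf0 t h1 h

end helpers

/-- Zero-count bounds for `𝒢_{n,j} = A·𝒜_{n,j} + B·𝒜_{n^l,j}` on real
intervals disjoint from `Δ¹_{j+1}`: at most `N_{1,j}` zeros if `j ≤ l₁`, and at most
`N_{1,j} - 1` zeros if `j > l₁`, counting multiplicities. -/
theorem combination_zero_bound
    (m₁ m₂ : ℕ) (S1 : NikSys m₁) (S2 : NikSys m₂)
    (hbase : S1.μ 0 = S2.μ 0 ∧ S1.e 0 = S2.e 0)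
    (n1 n2 : ℕ → ℕ) (l₁ l₂ : ℕ) (hl₁ : l₁ ≤ m₁) (hl₂ : l₂ ≤ m₂)
    (h1 : Decr m₁ n1) (h2 : Decr m₂ n2)
    (h1l : Decr m₁ (bump l₁ n1)) (h2l : Decr m₂ (bump l₂ n2))
    (hsum : msum m₂ n2 + 1 = msum m₁ n1)
    (A A' : ℕ → Polynomial ℝ)
    (hA : IsMOP m₁ m₂ S1 S2 n1 n2 A) (hAm : MonicLast m₁ A)
    (hA' : IsMOP m₁ m₂ S1 S2 (bump l₁ n1) (bump l₂ n2) A') (hA'm : MonicLast m₁ A')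
    (c d : ℝ) (j : ℕ) (hj : j ≤ m₁)
    (hne : ∃ z ∈ (if j < m₁ then (cpx (Set.Icc (S1.a (j+1)) (S1.b (j+1))))ᶜ
        else (Set.univ : Set ℂ)),
      (c : ℂ) * linForm S1.μ S1.e m₁ j A z +
        (d : ℂ) * linForm S1.μ S1.e m₁ j A' z ≠ 0) :
    ∀ u v : ℝ, (j < m₁ →
        Set.Icc u v ∩ Set.Icc (S1.a (j+1)) (S1.b (j+1)) = ∅) →
      (j ≤ l₁ →
        CZerosLE (fun z => (c : ℂ) * linForm S1.μ S1.e m₁ j A z +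
            (d : ℂ) * linForm S1.μ S1.e m₁ j A' z)
          (cpx (Set.Icc u v)) (tailSum m₁ n1 j)) ∧
      (l₁ < j →
        CZerosLT (fun z => (c : ℂ) * linForm S1.μ S1.e m₁ j A z +
            (d : ℂ) * linForm S1.μ S1.e m₁ j A' z)
          (cpx (Set.Icc u v)) (tailSum m₁ n1 j)) := by
  have hfun : (fun z => (c : ℂ) * linForm S1.μ S1.e m₁ j A z +
      (d : ℂ) * linForm S1.μ S1.e m₁ j A' z) =
      linForm S1.μ S1.e m₁ j (fun k => C c * A k + C d * A' k) := by
    funext z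
    simp only [linForm, Finset.mul_sum, ← Finset.sum_add_distrib]
    refine Finset.sum_congr rfl fun k _ => ?_
    simp only [map_add, map_mul, aeval_C, Complex.coe_algebraMap]
    ring
  have hdeg : ∀ k, j ≤ k → k ≤ m₁ →
      (C c * A k + C d * A' k).degree < ((bump l₁ n1 k : ℕ) : WithBot ℕ) := by
    intro k _ hk
    have hle : n1 k ≤ bump l₁ n1 k := by
      unfold bump; split_ifs <;> omega
    have hc : ∀ (r : ℝ) (q : ℝ[X]), (C r * q).degree ≤ q.degree := by
      intro r q
      rw [← smul_eq_C_mul]; exact degree_smul_le r q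
    have hd1 : (C c * A k).degree < ((bump l₁ n1 k : ℕ) : WithBot ℕ) :=
      ((hc c _).trans_lt (hA.1 k hk)).trans_le (by exact_mod_cast hle)
    have hd2 : (C d * A' k).degree < ((bump l₁ n1 k : ℕ) : WithBot ℕ) :=
      (hc d _).trans_lt (hA'.1 k hk)
    exact (degree_add_le _ _).trans_lt (max_lt hd1 hd2)
  have hnz : ∃ k, j ≤ k ∧ k ≤ m₁ ∧ C c * A k + C d * A' k ≠ 0 := by
    by_contra hcon
    push Not at hcon
    obtain ⟨z, _, hz⟩ := hne
    refine hz ((congrFun hfun z).trans ?_)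
    refine Finset.sum_eq_zero fun k hk => ?_
    rw [Finset.mem_Icc] at hk
    simp only [hcon k hk.1 hk.2, map_zero, zero_mul]
  intro u v huv
  rw [hfun]
  have main : CZerosLT (linForm S1.μ S1.e m₁ j (fun k => C c * A k + C d * A' k))
      (cpx (Set.Icc u v)) (tailSum m₁ (bump l₁ n1) j) := by
    intro S ord hS hz
    have hre : ∀ x ∈ S, ∃ t ∈ Set.Icc u v, (t : ℂ) = x := fun x hx => hS hx
    have h := aux_AT S1 (bump l₁ n1) h1l (m₁ - j) j (by omega) _ hdeg hnz
      (S.image Complex.re) (fun t => ord (t : ℂ))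
      (by
        intro x hx hjm hxin
        obtain ⟨y, hy, rfl⟩ := Finset.mem_image.1 hx
        obtain ⟨t, ht, rfl⟩ := hre y hy
        have : t ∈ Set.Icc u v ∩ Set.Icc (S1.a (j+1)) (S1.b (j+1)) := ⟨ht, by simpa using hxin⟩
        rw [huv hjm] at this
        exact this)
      (by
        intro x hx
        obtain ⟨y, hy, rfl⟩ := Finset.mem_image.1 hx
        obtain ⟨t, ht, rfl⟩ := hre y hy
        simpa using hz _ hy)
    rw [Finset.sum_image (by
      intro x hx y hy hxy
      obtain ⟨t, _, rfl⟩ := hre x hx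
      obtain ⟨s, _, rfl⟩ := hre y hy
      simpa using hxy)] at h
    refine lt_of_eq_of_lt (Finset.sum_congr rfl fun x hx => ?_) h
    obtain ⟨t, _, rfl⟩ := hre x hx
    simp
  constructor
  · intro hjl S ord hS hz
    have h := main S ord hS hz
    have ht : tailSum m₁ (bump l₁ n1) j = tailSum m₁ n1 j + 1 := by
      unfold tailSum bump
      have : ∀ k, (if k = l₁ then n1 k + 1 else n1 k) = n1 k + if k = l₁ then 1 else 0 := by
        intro k; split_ifs <;> rfl
      simp only [this, Finset.sum_add_distrib, Finset.sum_ite_eq', Finset.mem_Icc]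
      rw [if_pos ⟨hjl, hl₁⟩]
    omega
  · intro hjl
    have ht : tailSum m₁ (bump l₁ n1) j = tailSum m₁ n1 j := by
      unfold tailSum bump
      refine Finset.sum_congr rfl fun k hk => ?_
      rw [Finset.mem_Icc] at hk
      rw [if_neg (by omega)]
    rw [ht] at main
    exact main

end
end

section
/- Let n and n^l both lie in ℤ₊^{m₁+1}(•) × ℤ₊^{m₂+1}(•) with n_{1,m₁} ≥ 1, let A,B ∈ ℝ with |A| + |B| > 0, set G_{n,j} = A·A_{n,j} + B·A_{n^l,j}, and let k = max{ k′ ∈ {0,…,m₁} : G_{n,k′} is not identically zero }. Then k ≥ l₁ and G_{n,j} ≡ 0 for k < j ≤ m₁. For 0 ≤ j ≤ l₁, G_{n,j} has at most N_{1,j} zeros in ℂ∖Δ¹_{j+1}, counting multiplicities (Δ¹_{m₁+1} = ∅), and it changes sign at at least N_{1,j} − 1 points in the interior of Δ¹_j. For l₁ < j ≤ k, G_{n,j} has at most N_{1,j} − 1 zeros in ℂ∖Δ¹_{j+1} and changes sign at at least N_{1,j} − 2 points in the interior of Δ¹_j. Consequently, for 0 ≤ j ≤ k, all zeros of G_{n,j}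 in ℂ∖Δ¹_{j+1} are real and simple. -/
open MeasureTheory Polynomial Set Filter

noncomputable section

/-- A real function changes sign at `x₀`: every neighborhood of `x₀` contains points
`u, v` with `f u * f v < 0`. -/
def SignChangeAt (f : ℝ → ℝ) (x₀ : ℝ) : Prop :=
  ∀ δ > 0, ∃ u v : ℝ, |u - x₀| < δ ∧ |v - x₀| < δ ∧ f u * f v < 0

section Helpers

open Topology ComplexConjugate

lemma cpx_closed (a b : ℝ) : IsClosed (cpx (Icc a b)) :=
  (isCompact_Icc.image Complex.continuous_ofReal).isClosed

lemma sub_ne_of_not_cpx {a b : ℝ} {z : ℂ} (hz : z ∉ cpx (Icc a b)) {t : ℝ}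
    (ht : t ∈ Icc a b) : z - (t : ℂ) ≠ 0 := by
  intro h
  exact hz ⟨t, ht, (sub_eq_zero.mp h).symm⟩

lemma restr_self {μ : Measure ℝ} {a b : ℝ} (hμ : μ (Icc a b)ᶜ = 0) :
    μ.restrict (Icc a b) = μ :=
  Measure.restrict_eq_self_of_ae_mem (by
    rw [ae_iff]; exact hμ)

lemma ae_mem_Icc {μ : Measure ℝ} {a b : ℝ} (hμ : μ (Icc a b)ᶜ = 0) :
    ∀ᵐ t ∂μ, t ∈ Icc a b := by
  rw [ae_iff]; exact hμ

lemma intg_of_contOn {E : Type*} [NormedAddCommGroup E] {μ : Measure ℝ} [IsFiniteMeasure μ] {a b : ℝ}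
    (hμ : μ (Icc a b)ᶜ = 0) {φ : ℝ → E} (hφ : ContinuousOn φ (Icc a b)) : Integrable φ μ := by
  have := hφ.integrableOn_compact (μ := μ) isCompact_Icc
  rwa [IntegrableOn, restr_self hμ] at this

lemma cauchy_contOn {a b : ℝ} {φ : ℝ → ℂ} (hφ : ContinuousOn φ (Icc a b)) {z : ℂ}
    (hz : z ∉ cpx (Icc a b)) : ContinuousOn (fun t : ℝ => φ t / (z - (t : ℂ))) (Icc a b) :=
  hφ.div (by fun_prop) (fun _ ht => sub_ne_of_not_cpx hz ht)

lemma cauchy_diff {μ : Measure ℝ} [IsFiniteMeasure μ] {a b : ℝ}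
    (hμ : μ (Icc a b)ᶜ = 0) {φ : ℝ → ℂ} (hφ : ContinuousOn φ (Icc a b)) :
    DifferentiableOn ℂ (fun z => ∫ t, φ t / (z - (t : ℂ)) ∂μ) (cpx (Icc a b))ᶜ := by
  intro z hz
  obtain ⟨ε, hε, hball⟩ := Metric.isOpen_iff.mp (cpx_closed a b).isOpen_compl z hz
  obtain ⟨C, hC⟩ := isCompact_Icc.exists_bound_of_continuousOn hφ
  have key : ∀ t ∈ Icc a b, ∀ x ∈ Metric.ball z (ε/2), ε / 2 ≤ ‖x - (t : ℂ)‖ := by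
    intro t ht x hx
    by_contra hlt
    push Not at hlt
    have : (t : ℂ) ∈ Metric.ball z ε := by
      rw [Metric.mem_ball, dist_comm]
      calc dist z (t : ℂ) ≤ dist z x + dist x t := dist_triangle _ _ _
        _ < ε / 2 + ε / 2 := by
          rw [Metric.mem_ball, dist_comm] at hx
          rw [Complex.dist_eq x]
          linarith
        _ = ε := by ring
    exact hball this ⟨t, ht, rfl⟩
  have hmem : ∀ x ∈ Metric.ball z (ε/2), x ∉ cpx (Icc a b) := by
    intro x hx
    exact hball (Metric.ball_subset_ball (by linarith) hx)
  have := hasDerivAt_integral_of_dominated_loc_of_deriv_le (𝕜 := ℂ) (μ := μ)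
    (F := fun z t => φ t / (z - (t : ℂ))) (F' := fun z t => - φ t / (z - (t : ℂ))^2)
    (x₀ := z) (s := Metric.ball z (ε/2)) (bound := fun _ => C / (ε/2)^2)
    (Metric.ball_mem_nhds _ (by positivity)) ?_ ?_ ?_ ?_ ?_ ?_
  · exact this.2.differentiableAt.differentiableWithinAt
  · filter_upwards [Metric.ball_mem_nhds z (half_pos hε)] with x hx
    exact (intg_of_contOn hμ (cauchy_contOn hφ (hmem x hx))).aestronglyMeasurable
  · exact intg_of_contOn hμ (cauchy_contOn hφ hz)
  · refine (intg_of_contOn hμ ?_).aestronglyMeasurable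
    exact hφ.neg.div (by fun_prop) (fun _ ht => pow_ne_zero _ (sub_ne_of_not_cpx hz ht))
  · filter_upwards [ae_mem_Icc hμ] with t ht x hx
    rw [norm_div, norm_neg, norm_pow]
    have h0 : 0 ≤ C := (norm_nonneg _).trans (hC t ht)
    have := key t ht x hx
    gcongr
    exact hC t ht
  · exact integrable_const _
  · filter_upwards [ae_mem_Icc hμ] with t ht x hx
    have hne := sub_ne_of_not_cpx (hmem x hx) ht
    have h1 := ((hasDerivAt_id x).sub_const (t : ℂ)).inv hne
    have h2 := h1.const_mul (φ t)
    refine (h2.congr_deriv ?_).congr_of_eventuallyEq ?_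
    · simp; ring
    · filter_upwards with y
      simp [div_eq_mul_inv]

/-- Multiplying a Cauchy transform by a polynomial. -/
lemma poly_mul_cauchy {μ : Measure ℝ} [IsFiniteMeasure μ] {a b : ℝ}
    (hμ : μ (Icc a b)ᶜ = 0) {φ : ℝ → ℂ} (hφ : ContinuousOn φ (Icc a b)) (n : ℕ) :
    ∀ g : ℂ[X], g.degree < (n : WithBot ℕ) → ∃ P : ℂ[X], P.degree < (n : WithBot ℕ) ∧
      ∀ z ∉ cpx (Icc a b), g.eval z * ∫ t, φ t / (z - (t : ℂ)) ∂μ =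
        P.eval z + ∫ t, g.eval (t : ℂ) * φ t / (z - (t : ℂ)) ∂μ := by
  induction n with
  | zero =>
    intro g hg
    have : g = 0 := by
      rw [← degree_eq_bot]
      exact Nat.WithBot.lt_zero_iff.mp (by simpa using hg)
    subst this
    exact ⟨0, by simp, by simp⟩
  | succ n ih =>
    intro g hg
    have hd : g.divX.degree < (n : WithBot ℕ) := by
      rw [degree_lt_iff_coeff_zero] at hg ⊢
      intro m hm
      rw [coeff_divX]
      exact hg _ (by omega)
    obtain ⟨P, hP, hPz⟩ := ih _ hd
    have hgc : ContinuousOn (fun t : ℝ => g.divX.eval (t : ℂ) * φ t) (Icc a b) :=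
      ContinuousOn.mul (by fun_prop) hφ
    refine ⟨X * P + C (∫ t, g.divX.eval (t : ℂ) * φ t ∂μ), ?_, ?_⟩
    · rw [degree_lt_iff_coeff_zero] at hP ⊢
      intro m hm
      obtain ⟨m, rfl⟩ : ∃ m', m = m' + 1 := ⟨m - 1, by omega⟩
      simp [hP m (by omega)]
    · intro z hz
      have hsplit : ∀ w : ℂ, g.eval w = w * g.divX.eval w + g.coeff 0 := by
        intro w
        have h := congrArg (eval w) (X_mul_divX_add g)
        simp only [eval_add, eval_mul, eval_X, eval_C] at h
        exact h.symm
      have e1 := hPz z hz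
      have i1 := intg_of_contOn hμ (cauchy_contOn hφ hz)
      have i2 := intg_of_contOn hμ hgc
      have i3 := intg_of_contOn hμ (cauchy_contOn hgc hz)
      have e2 : ∫ t, g.eval (t : ℂ) * φ t / (z - (t : ℂ)) ∂μ =
          ∫ t, (z * (g.divX.eval (t : ℂ) * φ t / (z - (t : ℂ))) - g.divX.eval (t : ℂ) * φ t
            + g.coeff 0 * (φ t / (z - (t : ℂ)))) ∂μ := by
        apply integral_congr_ae
        filter_upwards [ae_mem_Icc hμ] with t ht
        have := sub_ne_of_not_cpx hz ht
        rw [hsplit]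
        field_simp
        ring
      have i4 : Integrable (fun t : ℝ => z * (g.divX.eval (t : ℂ) * φ t / (z - (t : ℂ))) -
          g.divX.eval (t : ℂ) * φ t) μ := (i3.const_mul z).sub i2
      rw [e2, integral_add i4 (i1.const_mul _), integral_sub (i3.const_mul z) i2,
        integral_const_mul, integral_const_mul, hsplit z]
      simp only [eval_add, eval_mul, eval_X, eval_C]
      linear_combination z * e1

lemma analyticAt_cauchyF {μ : Measure ℝ} [IsFiniteMeasure μ] {a b : ℝ}
    (hμ : μ (Icc a b)ᶜ = 0) {H : ℝ → ℂ} (hH : ContinuousOn H (Icc a b)) (P : ℂ[X])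
    {F : ℂ → ℂ} (hF : ∀ z ∉ cpx (Icc a b), F z = P.eval z + ∫ t, H t / (z - (t : ℂ)) ∂μ)
    {z : ℂ} (hz : z ∉ cpx (Icc a b)) : AnalyticAt ℂ F z := by
  have ho : IsOpen (cpx (Icc a b))ᶜ := (cpx_closed a b).isOpen_compl
  have : DifferentiableOn ℂ F (cpx (Icc a b))ᶜ := by
    have h2 : DifferentiableOn ℂ (fun z => P.eval z + ∫ t, H t / (z - (t : ℂ)) ∂μ)
        (cpx (Icc a b))ᶜ := P.differentiable.differentiableOn.add (cauchy_diff hμ hH)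
    exact h2.congr (fun z hz => hF z hz)
  exact this.analyticAt (ho.mem_nhds hz)

lemma prod_sub_ne_zero {a b : ℝ} {s : Multiset ℂ} (hs : ∀ w ∈ s, w ∉ cpx (Icc a b)) {t : ℝ}
    (ht : t ∈ Icc a b) : (s.map (fun w => (t : ℂ) - w)).prod ≠ 0 := by
  rw [Ne, Multiset.prod_eq_zero_iff, Multiset.mem_map]
  rintro ⟨w, hw, h⟩
  exact sub_ne_of_not_cpx (hs w hw) ht (by rw [← neg_sub, h, neg_zero])

lemma prod_sub_cont (s : Multiset ℂ) :
    Continuous (fun t : ℝ => (s.map (fun w => (t : ℂ) - w)).prod) := by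
  induction s using Multiset.induction with
  | empty => simpa using continuous_const
  | cons w s ih =>
    simp only [Multiset.map_cons, Multiset.prod_cons]
    exact (by fun_prop : Continuous fun t : ℝ => (t : ℂ) - w).mul ih

/-- Zeros of a function of the second kind produce orthogonality relations. -/
lemma orth_of_zeros {μ : Measure ℝ} [IsFiniteMeasure μ] {a b : ℝ}
    (hμ : μ (Icc a b)ᶜ = 0) (s : Multiset ℂ) : ∀ (n : ℕ) (P : ℂ[X]) (H : ℝ → ℂ) (F : ℂ → ℂ),
    ContinuousOn H (Icc a b) → P.degree < (n : WithBot ℕ) →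
    (∀ z ∉ cpx (Icc a b), F z = P.eval z + ∫ t, H t / (z - (t : ℂ)) ∂μ) →
    (∀ w ∈ s, w ∉ cpx (Icc a b)) →
    (∀ w ∈ s, (s.count w : ℕ∞) ≤ analyticOrderAt F w) →
    ∀ q : ℂ[X], q.natDegree + n < s.card →
      ∫ t, q.eval (t : ℂ) * H t / (s.map (fun w => (t : ℂ) - w)).prod ∂μ = 0 := by
  induction s using Multiset.induction with
  | empty => intro n P H F _ _ _ _ _ q hq; simp at hq
  | cons w s ih =>
    intro n P H F hH hP hF hs hord q hq
    have hw : w ∉ cpx (Icc a b) := hs w (Multiset.mem_cons_self w s)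
    have hFw : F w = 0 := by
      apply apply_eq_zero_of_analyticOrderAt_ne_zero
      intro h0
      have := hord w (Multiset.mem_cons_self w s)
      rw [h0, Multiset.count_cons_self] at this
      simp at this
    set H1 : ℝ → ℂ := fun t => H t / ((t : ℂ) - w) with hH1
    have htw : ∀ t ∈ Icc a b, (t : ℂ) - w ≠ 0 := fun t ht h =>
      sub_ne_of_not_cpx hw ht (by rw [← neg_sub, h, neg_zero])
    have hH1c : ContinuousOn H1 (Icc a b) := hH.div (by fun_prop) htw
    set P1 : ℂ[X] := P /ₘ (X - C w) with hP1
    have hPsplit : ∀ z, P.eval z = (z - w) * P1.eval z + P.eval w := by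
      intro z
      have h := congrArg (eval z) (modByMonic_add_div P (X - C w))
      rw [modByMonic_X_sub_C_eq_C_eval] at h
      simp only [eval_add, eval_mul, eval_X, eval_C, eval_sub] at h
      rw [← h]; ring
    have hP1deg : P1.degree < ((n - 1 : ℕ) : WithBot ℕ) := by
      by_cases h0 : P1 = 0
      · rw [h0, degree_zero]; exact WithBot.bot_lt_coe _
      · rw [degree_eq_natDegree h0, hP1, natDegree_divByMonic _ (monic_X_sub_C w), natDegree_X_sub_C]
        have hP0 : P ≠ 0 := by rintro rfl; simp [hP1] at h0
        have h1 : 1 ≤ P.natDegree := by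
          by_contra hlt
          apply h0
          rw [hP1, divByMonic_eq_zero_iff (monic_X_sub_C w), degree_X_sub_C,
            degree_eq_natDegree hP0]
          have : P.natDegree = 0 := by omega
          rw [this]; norm_num
        have h2 : P.natDegree < n := by
          rw [degree_eq_natDegree hP0] at hP; exact_mod_cast hP
        exact_mod_cast (by omega : P.natDegree - 1 < n - 1)
    have hint1 := intg_of_contOn hμ hH1c
    have hFw' : P.eval w = ∫ t, H1 t ∂μ := by
      have h := hF w hw
      have : ∫ t, H t / (w - (t : ℂ)) ∂μ = ∫ t, - H1 t ∂μ := by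
        apply integral_congr_ae
        filter_upwards [ae_mem_Icc hμ] with t ht
        rw [hH1, ← neg_sub, div_neg]
      rw [this, integral_neg, hFw] at h
      linear_combination -h
    set F1 : ℂ → ℂ := fun z => P1.eval z + ∫ t, H1 t / (z - (t : ℂ)) ∂μ with hF1
    have hFF1 : ∀ z ∉ cpx (Icc a b), F z = (z - w) * F1 z := by
      intro z hz
      have : ∫ t, H t / (z - (t : ℂ)) ∂μ =
          ∫ t, ((z - w) * (H1 t / (z - (t : ℂ))) - H1 t) ∂μ := by
        apply integral_congr_ae
        filter_upwards [ae_mem_Icc hμ] with t ht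
        have h1 := htw t ht
        have h2 := sub_ne_of_not_cpx hz ht
        rw [hH1]
        field_simp
        ring
      rw [hF z hz, this, integral_sub ((intg_of_contOn hμ (cauchy_contOn hH1c hz)).const_mul _) hint1,
        integral_const_mul, hPsplit z, hF1, hFw']
      ring
    have hF1an : ∀ z ∉ cpx (Icc a b), AnalyticAt ℂ F1 z := fun z hz =>
      analyticAt_cauchyF hμ hH1c P1 (fun z _ => rfl) hz
    have hordF : ∀ v ∉ cpx (Icc a b), analyticOrderAt F v =
        analyticOrderAt (fun z : ℂ => z - w) v + analyticOrderAt F1 v := by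
      intro v hv
      rw [← analyticOrderAt_mul (by fun_prop) (hF1an v hv)]
      apply analyticOrderAt_congr
      filter_upwards [(cpx_closed a b).isOpen_compl.mem_nhds hv] with z hz
      exact hFF1 z hz
    have hord1 : ∀ v ∈ s, (s.count v : ℕ∞) ≤ analyticOrderAt F1 v := by
      intro v hv
      have hvs := hord v (Multiset.mem_cons_of_mem hv)
      rw [hordF v (hs v (Multiset.mem_cons_of_mem hv))] at hvs
      by_cases hvw : v = w
      · subst hvw
        have : analyticOrderAt (fun z : ℂ => z - v) v = 1 := analyticOrderAt_id_sub_const_self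
        rw [this, Multiset.count_cons_self] at hvs
        push_cast at hvs
        rw [add_comm] at hvs
        exact (ENat.add_le_add_iff_left (by simp)).mp hvs
      · have : analyticOrderAt (fun z : ℂ => z - w) v = 0 :=
          analyticOrderAt_id_sub_const_of_ne hvw
        rwa [this, Multiset.count_cons_of_ne hvw, zero_add] at hvs
    have IH := ih (n - 1) P1 H1 F1 hH1c hP1deg (fun z _ => rfl)
      (fun v hv => hs v (Multiset.mem_cons_of_mem hv)) hord1
    have hrew : ∀ (q : ℂ[X]), ∀ t : ℝ, q.eval (t : ℂ) * H t / ((w ::ₘ s).map (fun w => (t : ℂ) - w)).prod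
        = q.eval (t : ℂ) * H1 t / (s.map (fun w => (t : ℂ) - w)).prod := by
      intro q t
      rw [Multiset.map_cons, Multiset.prod_cons, hH1]
      simp only [div_eq_mul_inv, mul_inv]
      ring
    simp only [hrew]
    rw [Multiset.card_cons] at hq
    rcases Nat.eq_zero_or_pos n with hn | hn
    · subst hn
      have hP0 : P = 0 := by
        rw [← degree_eq_bot]
        exact Nat.WithBot.lt_zero_iff.mp (by simpa using hP)
      have hint0 : ∫ t, H1 t ∂μ = 0 := by rw [← hFw', hP0, eval_zero]
      rcases Nat.lt_or_ge q.natDegree s.card with hlt | hge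
      · exact IH q (by omega)
      · set W : ℂ[X] := (s.map (fun w => X - C w)).prod with hW
        have hWm : W.Monic := monic_multiset_prod_of_monic _ _ (fun w _ => monic_X_sub_C w)
        have hWd : W.natDegree = s.card := natDegree_multiset_prod_X_sub_C_eq_card s
        have hWe : ∀ t : ℝ, W.eval (t : ℂ) = (s.map (fun w => (t : ℂ) - w)).prod := by
          intro t
          rw [hW, eval_multiset_prod, Multiset.map_map]
          simp
        have hqd : (q /ₘ W).natDegree = 0 := by
          rw [natDegree_divByMonic _ hWm, hWd]; omega
        obtain ⟨c, hc⟩ := natDegree_eq_zero.mp hqd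
        have hdec : ∀ z, q.eval z = (q %ₘ W).eval z + W.eval z * c := by
          intro z
          have h := congrArg (eval z) (modByMonic_add_div q W)
          rw [← hc] at h
          simp only [eval_add, eval_mul, eval_C] at h
          exact h.symm
        have hs' : ∀ v ∈ s, v ∉ cpx (Icc a b) := fun v hv => hs v (Multiset.mem_cons_of_mem hv)
        have e : ∫ t, q.eval (t : ℂ) * H1 t / (s.map (fun w => (t : ℂ) - w)).prod ∂μ =
            ∫ t, ((q %ₘ W).eval (t : ℂ) * H1 t / (s.map (fun w => (t : ℂ) - w)).prod + c * H1 t) ∂μ := by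
          apply integral_congr_ae
          filter_upwards [ae_mem_Icc hμ] with t ht
          have := prod_sub_ne_zero hs' ht
          rw [hdec, hWe]
          field_simp
        have i1 : Integrable (fun t : ℝ => (q %ₘ W).eval (t : ℂ) * H1 t /
            (s.map (fun w => (t : ℂ) - w)).prod) μ := by
          apply intg_of_contOn hμ
          refine ContinuousOn.div (ContinuousOn.mul ?_ hH1c) (prod_sub_cont s).continuousOn
            (fun t ht => prod_sub_ne_zero hs' ht)
          fun_prop
        rw [e, integral_add i1 (hint1.const_mul c), integral_const_mul, hint0, mul_zero, add_zero]
        by_cases hs0 : s.card = 0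
        · have hW1 : W = 1 := by
            rw [Multiset.card_eq_zero] at hs0
            rw [hW, hs0]; simp
          rw [hW1]
          simp
        · apply IH
          have := natDegree_modByMonic_lt q hWm (by
            intro h1; rw [h1, natDegree_one] at hWd; omega)
          omega
    · exact IH q (by omega)

/-- Zero count for polynomials with multiplicities measured by analytic order. -/
lemma poly_zeros (s : Multiset ℂ) : ∀ (P : ℂ[X]), P ≠ 0 →
    (∀ w ∈ s, (s.count w : ℕ∞) ≤ analyticOrderAt (fun z => P.eval z) w) →
    s.card ≤ P.natDegree := by
  induction s using Multiset.induction with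
  | empty => intro P _ _; simp
  | cons w s ih =>
    intro P hP hord
    have hPw : P.eval w = 0 := by
      apply apply_eq_zero_of_analyticOrderAt_ne_zero (f := fun z => P.eval z)
      intro h0
      have := hord w (Multiset.mem_cons_self w s)
      rw [h0, Multiset.count_cons_self] at this
      simp at this
    obtain ⟨Q, rfl⟩ := dvd_iff_isRoot.mpr hPw
    have hQ : Q ≠ 0 := right_ne_zero_of_mul hP
    have han : ∀ (R : ℂ[X]) v, AnalyticAt ℂ (fun z => R.eval z) v := fun R v =>
      R.differentiable.analyticAt v
    have hordF : ∀ v, analyticOrderAt (fun z => ((X - C w) * Q).eval z) v =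
        analyticOrderAt (fun z : ℂ => z - w) v + analyticOrderAt (fun z => Q.eval z) v := by
      intro v
      rw [← analyticOrderAt_mul (by fun_prop) (han Q v)]
      apply analyticOrderAt_congr
      filter_upwards with z
      simp
    rw [natDegree_mul (X_sub_C_ne_zero w) hQ, natDegree_X_sub_C, Multiset.card_cons]
    have := ih Q hQ (by
      intro v hv
      have hvs := hord v (Multiset.mem_cons_of_mem hv)
      rw [hordF v] at hvs
      by_cases hvw : v = w
      · subst hvw
        have : analyticOrderAt (fun z : ℂ => z - v) v = 1 := analyticOrderAt_id_sub_const_self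
        rw [this, Multiset.count_cons_self] at hvs
        push_cast at hvs
        rw [add_comm] at hvs
        exact (ENat.add_le_add_iff_left (by simp)).mp hvs
      · have : analyticOrderAt (fun z : ℂ => z - w) v = 0 :=
          analyticOrderAt_id_sub_const_of_ne hvw
        rwa [this, Multiset.count_cons_of_ne hvw, zero_add] at hvs)
    omega

lemma signChange_neg {f : ℝ → ℝ} {x : ℝ} (h : SignChangeAt (fun t => - f t) x) :
    SignChangeAt f x := by
  intro δ hδ
  obtain ⟨u, v, hu, hv, huv⟩ := h δ hδ
  exact ⟨u, v, hu, hv, by simpa using huv⟩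

lemma signChange_zero {f : ℝ → ℝ} {x : ℝ} (hf : ContinuousAt f x) (h : SignChangeAt f x) :
    f x = 0 := by
  by_contra hne
  have hpos : 0 < f x * f x := mul_self_pos.mpr hne
  rcases lt_or_gt_of_ne hne with h0 | h0
  · obtain ⟨δ, hδ, hb⟩ := Metric.eventually_nhds_iff.mp (hf.eventually_lt_const h0)
    obtain ⟨u, v, hu, hv, huv⟩ := h δ hδ
    have h1 := hb (y := u) (by rwa [Real.dist_eq])
    have h2 := hb (y := v) (by rwa [Real.dist_eq])
    nlinarith [mul_pos_of_neg_of_neg h1 h2]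
  · obtain ⟨δ, hδ, hb⟩ := Metric.eventually_nhds_iff.mp (hf.eventually_const_lt h0)
    obtain ⟨u, v, hu, hv, huv⟩ := h δ hδ
    have h1 := hb (y := u) (by rwa [Real.dist_eq])
    have h2 := hb (y := v) (by rwa [Real.dist_eq])
    nlinarith [mul_pos h1 h2]

/-- Multiplying with a function of constant sign near `x` does not affect sign changes. -/
lemma signChange_mul_cont {f u : ℝ → ℝ} {x : ℝ} (hu : ContinuousAt u x) (hx : u x ≠ 0)
    (h : SignChangeAt (fun t => f t * u t) x) : SignChangeAt f x := by
  have : ∀ᶠ t in 𝓝 x, 0 < u t * u x :=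
    (hu.mul continuousAt_const).eventually_const_lt (mul_self_pos.mpr hx)
  obtain ⟨ε, hε, hb⟩ := Metric.eventually_nhds_iff.mp this
  intro δ hδ
  obtain ⟨p, q, hp, hq, hpq⟩ := h (min δ ε) (lt_min hδ hε)
  refine ⟨p, q, hp.trans_le (min_le_left _ _), hq.trans_le (min_le_left _ _), ?_⟩
  have h1 := hb (y := p) (by rw [Real.dist_eq]; exact hp.trans_le (min_le_right _ _))
  have h2 := hb (y := q) (by rw [Real.dist_eq]; exact hq.trans_le (min_le_right _ _))
  have h3 : 0 < u p * u q := by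
    by_contra hle
    push Not at hle
    have : 0 < (u p * u q) * (u x * u x) := by nlinarith [mul_pos h1 h2]
    nlinarith [mul_self_nonneg (u x)]
  by_contra hge
  push Not at hge
  nlinarith [mul_nonneg hge h3.le]

lemma signChange_congr {f g : ℝ → ℝ} {x : ℝ} (hfg : ∀ᶠ t in 𝓝 x, f t = g t)
    (h : SignChangeAt f x) : SignChangeAt g x := by
  obtain ⟨ε, hε, hb⟩ := Metric.eventually_nhds_iff.mp hfg
  intro δ hδ
  obtain ⟨p, q, hp, hq, hpq⟩ := h (min δ ε) (lt_min hδ hε)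
  refine ⟨p, q, hp.trans_le (min_le_left _ _), hq.trans_le (min_le_left _ _), ?_⟩
  rw [← hb (y := p) (by rw [Real.dist_eq]; exact hp.trans_le (min_le_right _ _)),
    ← hb (y := q) (by rw [Real.dist_eq]; exact hq.trans_le (min_le_right _ _))]
  exact hpq

/-- IVT: a continuous function without zeros on an interval has constant sign. -/
lemma pos_mul_of_no_zero {f : ℝ → ℝ} {s : Set ℝ} (hs : s.OrdConnected) (hf : ContinuousOn f s)
    (h0 : ∀ t ∈ s, f t ≠ 0) {u v : ℝ} (hu : u ∈ s) (hv : v ∈ s) : 0 < f u * f v := by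
  have hp : IsPreconnected s := isPreconnected_iff_ordConnected.mpr hs
  by_contra hle
  push Not at hle
  have hlt : f u * f v < 0 := lt_of_le_of_ne hle (mul_ne_zero (h0 u hu) (h0 v hv))
  have key := hp.intermediate_value hu hv hf
  have key2 := hp.intermediate_value hv hu hf
  rcases mul_neg_iff.mp hlt with ⟨h1, h2⟩ | ⟨h1, h2⟩
  · obtain ⟨t, ht, h⟩ := key2 ⟨h2.le, h1.le⟩
    exact h0 t ht h
  · obtain ⟨t, ht, h⟩ := key ⟨h1.le, h2.le⟩
    exact h0 t ht h

/-- If `f` changes sign at `x` (isolated zero), then `(t-x) f(t)` does not. -/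
lemma signChange_flip {f : ℝ → ℝ} {a b x : ℝ} (hf : ContinuousOn f (Icc a b)) (hx : x ∈ Ioo a b)
    (hfin : {t ∈ Icc a b | f t = 0}.Finite) (h : SignChangeAt f x) :
    ¬ SignChangeAt (fun t => f t * (t - x)) x := by
  intro h'
  have hcx : ContinuousAt f x := hf.continuousAt (Icc_mem_nhds hx.1 hx.2)
  have hfx := signChange_zero hcx h
  -- a punctured neighbourhood without zeros
  have hev : ∀ᶠ t in 𝓝 x, t ∈ Ioo a b ∧ t ∉ {t ∈ Icc a b | f t = 0} \ {x} := by
    refine Filter.Eventually.and (Ioo_mem_nhds hx.1 hx.2) ?_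
    have hc : IsClosed ({t ∈ Icc a b | f t = 0} \ {x}) := (hfin.subset sdiff_subset).isClosed
    exact hc.isOpen_compl.mem_nhds (by simp)
  obtain ⟨ε, hε, hb⟩ := Metric.eventually_nhds_iff.mp hev
  have hnz : ∀ t, |t - x| < ε → t ≠ x → t ∈ Icc a b ∧ f t ≠ 0 := by
    intro t ht htx
    have := hb (y := t) (by rwa [Real.dist_eq])
    refine ⟨Ioo_subset_Icc_self this.1, fun h0 => this.2 ⟨⟨Ioo_subset_Icc_self this.1, h0⟩, htx⟩⟩
  have hR : ∀ u v, |u - x| < ε → |v - x| < ε → x < u → x < v → 0 < f u * f v := by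
    intro u v hu hv hxu hxv
    have hsub : ∀ t ∈ Ioo x (x + ε), t ∈ Icc a b ∧ f t ≠ 0 := by
      intro t ht
      exact hnz t (by rw [abs_lt]; constructor <;> linarith [ht.1, ht.2]) ht.1.ne'
    rw [abs_lt] at hu hv
    exact pos_mul_of_no_zero (s := Ioo x (x + ε)) ordConnected_Ioo
      (hf.mono fun t ht => (hsub t ht).1) (fun t ht => (hsub t ht).2)
      ⟨hxu, by linarith⟩ ⟨hxv, by linarith⟩
  have hL : ∀ u v, |u - x| < ε → |v - x| < ε → u < x → v < x → 0 < f u * f v := by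
    intro u v hu hv hxu hxv
    have hsub : ∀ t ∈ Ioo (x - ε) x, t ∈ Icc a b ∧ f t ≠ 0 := by
      intro t ht
      exact hnz t (by rw [abs_lt]; constructor <;> linarith [ht.1, ht.2]) ht.2.ne
    rw [abs_lt] at hu hv
    exact pos_mul_of_no_zero (s := Ioo (x - ε) x) ordConnected_Ioo
      (hf.mono fun t ht => (hsub t ht).1) (fun t ht => (hsub t ht).2)
      ⟨by linarith, hxu⟩ ⟨by linarith, hxv⟩
  -- opposite signs
  have hopp : ∃ l r, |l - x| < ε ∧ |r - x| < ε ∧ l < x ∧ x < r ∧ f l * f r < 0 := by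
    obtain ⟨u, v, hu, hv, huv⟩ := h ε hε
    rcases lt_trichotomy u x with h1 | h1 | h1
    · rcases lt_trichotomy v x with h2 | h2 | h2
      · linarith [hL u v hu hv h1 h2]
      · rw [h2, hfx] at huv; simp at huv
      · exact ⟨u, v, hu, hv, h1, h2, huv⟩
    · rw [h1, hfx] at huv; simp at huv
    · rcases lt_trichotomy v x with h2 | h2 | h2
      · exact ⟨v, u, hv, hu, h2, h1, by linarith [mul_comm (f u) (f v)]⟩
      · rw [h2, hfx] at huv; simp at huv
      · linarith [hR u v hu hv h1 h2]
  obtain ⟨l, r, hl, hr, hlx, hxr, hlr⟩ := hopp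
  have hLR : ∀ u v, |u - x| < ε → |v - x| < ε → u < x → x < v → f u * f v < 0 := by
    intro u v hu hv hux hxv
    have h1 := hL u l hu hl hux hlx
    have h2 := hR v r hv hr hxv hxr
    by_contra hge
    push Not at hge
    have h3 : 0 ≤ (f u * f l) * (f v * f r) := by positivity
    have h4 : (f u * f l) * (f v * f r) = (f u * f v) * (f l * f r) := by ring
    have h5 : 0 < (f u * f l) * (f v * f r) := mul_pos h1 h2
    nlinarith [mul_nonneg hge (neg_nonneg.mpr hlr.le)]
  obtain ⟨u, v, hu, hv, huv⟩ := h' ε hε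
  simp only at huv
  have e : f u * (u - x) * (f v * (v - x)) = (f u * f v) * ((u - x) * (v - x)) := by ring
  rw [e] at huv
  rcases lt_trichotomy u x with h1 | h1 | h1
  · rcases lt_trichotomy v x with h2 | h2 | h2
    · nlinarith [mul_pos (hL u v hu hv h1 h2) (mul_pos_of_neg_of_neg (sub_neg.mpr h1) (sub_neg.mpr h2))]
    · rw [h2] at huv; simp at huv
    · nlinarith [mul_pos_of_neg_of_neg (hLR u v hu hv h1 h2)
        (mul_neg_of_neg_of_pos (sub_neg.mpr h1) (sub_pos.mpr h2))]
  · rw [h1] at huv; simp at huv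
  · rcases lt_trichotomy v x with h2 | h2 | h2
    · have h3 := hLR v u hv hu h2 h1
      rw [mul_comm] at h3
      nlinarith [mul_pos_of_neg_of_neg h3 (mul_neg_of_pos_of_neg (sub_pos.mpr h1) (sub_neg.mpr h2))]
    · rw [h2] at huv; simp at huv
    · nlinarith [mul_pos (hR u v hu hv h1 h2) (mul_pos (sub_pos.mpr h1) (sub_pos.mpr h2))]

lemma no_signChange_aux {f : ℝ → ℝ} {a b : ℝ} (hf : ContinuousOn f (Icc a b))
    (hfin : {t ∈ Icc a b | f t = 0}.Finite) (hno : ∀ x ∈ Ioo a b, ¬ SignChangeAt f x)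
    {u v : ℝ} (hu : u ∈ Icc a b) (hv : v ∈ Icc a b) (huv : u < v) (hfu : f u < 0) :
    f v ≤ 0 := by
  by_contra hfv
  push Not at hfv
  set T : Set ℝ := {x ∈ Icc u v | ∀ y ∈ Icc u x, f y ≤ 0} with hT
  have hsub : Icc u v ⊆ Icc a b := Icc_subset_Icc hu.1 hv.2
  have huT : u ∈ T := ⟨⟨le_rfl, huv.le⟩, fun y hy => by
    have : y = u := le_antisymm hy.2 hy.1
    rw [this]; exact hfu.le⟩
  have hbdd : BddAbove T := ⟨v, fun x hx => hx.1.2⟩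
  set s := sSup T with hs
  have hus : u ≤ s := le_csSup hbdd huT
  have hsv : s ≤ v := csSup_le ⟨u, huT⟩ (fun x hx => hx.1.2)
  have hbelow : ∀ y, u ≤ y → y < s → f y ≤ 0 := by
    intro y hy hys
    obtain ⟨x, hx, hyx⟩ := exists_lt_of_lt_csSup ⟨u, huT⟩ hys
    exact hx.2 y ⟨hy, hyx.le⟩
  have hsI : s ∈ Icc a b := hsub ⟨hus, hsv⟩
  have hcs : ContinuousWithinAt f (Icc a b) s := hf s hsI
  -- f s ≤ 0
  have hfs : f s ≤ 0 := by
    by_contra hpos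
    push Not at hpos
    have hus' : u < s := lt_of_le_of_ne hus (fun h => by rw [← h] at hpos; linarith)
    have hev : ∀ᶠ t in 𝓝[Icc a b] s, 0 < f t := hcs.eventually_const_lt hpos
    obtain ⟨ε, hε, hb⟩ := Metric.mem_nhdsWithin_iff.mp hev
    have hy : max u (s - ε / 2) < s := max_lt hus' (by linarith)
    have h1 := hbelow _ (le_max_left _ _) hy
    have h2 := hb (a := max u (s - ε / 2)) ⟨by
      rw [Metric.mem_ball, Real.dist_eq, abs_lt]
      constructor <;> linarith [le_max_right u (s - ε/2)],
      hsub ⟨le_max_left _ _, hy.le.trans hsv⟩⟩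
    simp only [mem_ofPred_eq] at h2
    linarith
  have hsv' : s < v := lt_of_le_of_ne hsv (fun h => by rw [h] at hfs; linarith)
  have hright : ∀ δ > 0, ∃ y, s < y ∧ y < s + δ ∧ y ≤ v ∧ 0 < f y := by
    intro δ hδ
    by_contra hcon
    push Not at hcon
    have hmem : min v (s + δ / 2) ∈ T := by
      refine ⟨⟨le_min huv.le (by linarith), min_le_left _ _⟩, ?_⟩
      intro y hy
      rcases lt_trichotomy y s with h | h | h
      · exact hbelow y hy.1 h
      · rw [h]; exact hfs
      · exact hcon y h (by linarith [hy.2.trans (min_le_right v (s + δ/2))])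
          (hy.2.trans (min_le_left _ _))
    have := le_csSup hbdd hmem
    have h3 : s < min v (s + δ / 2) := lt_min hsv' (by linarith)
    linarith
  have hus' : u < s := by
    refine lt_of_le_of_ne hus (fun h => ?_)
    have hev : ∀ᶠ t in 𝓝[Icc a b] s, f t < 0 := hcs.eventually_lt_const (by rw [← h]; exact hfu)
    obtain ⟨ε, hε, hb⟩ := Metric.mem_nhdsWithin_iff.mp hev
    obtain ⟨y, hy1, hy2, hy3, hy4⟩ := hright ε hε
    have h2 := hb (a := y) ⟨by
      rw [Metric.mem_ball, Real.dist_eq, abs_lt]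
      constructor <;> linarith, hsub ⟨by linarith, hy3⟩⟩
    simp only [mem_ofPred_eq] at h2
    linarith
  have hleft : ∀ δ > 0, ∃ y, s - δ < y ∧ y < s ∧ f y < 0 := by
    intro δ hδ
    by_contra hcon
    push Not at hcon
    have hlt : max u (s - δ) < s := max_lt hus' (by linarith)
    have hinf : (Ioo (max u (s - δ)) s).Infinite := Ioo_infinite hlt
    refine hinf (hfin.subset ?_)
    intro y hy
    have h1 : u < y := (le_max_left _ _).trans_lt hy.1
    have h2 : s - δ < y := (le_max_right _ _).trans_lt hy.1
    exact ⟨hsub ⟨h1.le, hy.2.le.trans hsv⟩,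
      le_antisymm (hbelow y h1.le hy.2) (hcon y h2 hy.2)⟩
  refine hno s ⟨by linarith [hu.1], by linarith [hv.2]⟩ ?_
  intro δ hδ
  obtain ⟨p, hp1, hp2, hp3⟩ := hleft δ hδ
  obtain ⟨q, hq1, hq2, hq3, hq4⟩ := hright δ hδ
  exact ⟨p, q, by rw [abs_lt]; constructor <;> linarith, by rw [abs_lt]; constructor <;> linarith,
    mul_neg_of_neg_of_pos hp3 hq4⟩

lemma const_sign {f : ℝ → ℝ} {a b : ℝ} (hf : ContinuousOn f (Icc a b))
    (hfin : {t ∈ Icc a b | f t = 0}.Finite) (hno : ∀ x ∈ Ioo a b, ¬ SignChangeAt f x) :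
    (∀ t ∈ Icc a b, 0 ≤ f t) ∨ (∀ t ∈ Icc a b, f t ≤ 0) := by
  by_contra hcon
  push Not at hcon
  obtain ⟨⟨u, hu, hfu⟩, ⟨v, hv, hfv⟩⟩ := hcon
  rcases lt_trichotomy u v with h | h | h
  · linarith [no_signChange_aux hf hfin hno hu hv h hfu]
  · rw [h] at hfu; linarith
  · have := no_signChange_aux (f := fun t => - f t) hf.neg (by simpa using hfin)
      (fun x hx hsc => hno x hx (signChange_neg hsc)) hv hu h (by simpa using hfv)
    linarith

/-- A continuous function of constant sign with finitely many zeros has nonzero integral. -/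
lemma integral_ne_zero_of_sign {μ : Measure ℝ} [IsFiniteMeasure μ] {a b : ℝ}
    (hμ : μ (Icc a b)ᶜ = 0) (hsub : msupport μ ⊆ Icc a b) (hinf : (msupport μ).Infinite)
    {f : ℝ → ℝ} (hf : ContinuousOn f (Icc a b))
    (hfin : {t ∈ Icc a b | f t = 0}.Finite) (hpos : ∀ t ∈ Icc a b, 0 ≤ f t) :
    ∫ t, f t ∂μ ≠ 0 := by
  intro h0
  have hae : 0 ≤ᵐ[μ] f := by
    filter_upwards [ae_mem_Icc hμ] with t ht using hpos t ht
  rw [integral_eq_zero_iff_of_nonneg_ae hae (intg_of_contOn hμ hf)] at h0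
  have hfin2 : ({t ∈ Icc a b | f t = 0} ∪ {a, b}).Finite := hfin.union (by simp)
  obtain ⟨x, hx, hxn⟩ := (hinf.sdiff hfin2).nonempty
  have hxI := hsub hx
  simp only [mem_union, mem_ofPred_eq, mem_insert_iff, mem_singleton_iff, not_or, not_and] at hxn
  have hxo : x ∈ Ioo a b := ⟨lt_of_le_of_ne hxI.1 (Ne.symm hxn.2.1), lt_of_le_of_ne hxI.2 hxn.2.2⟩
  have hca : ContinuousAt f x := hf.continuousAt (Icc_mem_nhds hxo.1 hxo.2)
  have hev : ∀ᶠ t in 𝓝 x, f t ≠ 0 := hca.eventually_ne (hxn.1 hxI)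
  obtain ⟨U, hU, hUo, hxU⟩ := mem_nhds_iff.mp hev
  refine hx U hUo hxU ?_
  refine measure_mono_null ?_ (ae_iff.mp h0)
  intro t ht
  exact hU ht

lemma core_ne_zero {μ : Measure ℝ} [IsFiniteMeasure μ] {a b : ℝ}
    (hμ : μ (Icc a b)ᶜ = 0) (hsub : msupport μ ⊆ Icc a b) (hinf : (msupport μ).Infinite)
    {h Q : ℝ → ℝ} (hh : ContinuousOn h (Icc a b)) (hQ : ContinuousOn Q (Icc a b))
    (hfin : {t ∈ Icc a b | h t = 0}.Finite) (Z : Finset ℝ)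
    (hZ : ∀ x ∈ Ioo a b, SignChangeAt h x → x ∈ Z)
    (hZs : ∀ x ∈ Z, SignChangeAt h x)
    (hQnz : ∀ x ∈ Icc a b, x ∉ Z → Q x ≠ 0)
    (hQZ : ∀ x ∈ Z, ∃ u : ℝ → ℝ, ContinuousAt u x ∧ u x ≠ 0 ∧ ∀ᶠ t in 𝓝 x, Q t = (t - x) * u t) :
    ∫ t, h t * Q t ∂μ ≠ 0 := by
  have hno : ∀ x ∈ Ioo a b, ¬ SignChangeAt (fun t => h t * Q t) x := by
    intro x hx hsc
    by_cases hxZ : x ∈ Z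
    · obtain ⟨u, hu, hux, hev⟩ := hQZ x hxZ
      refine signChange_flip hh hx hfin (hZs x hxZ) ?_
      apply signChange_mul_cont hu hux
      refine signChange_congr ?_ hsc
      filter_upwards [hev] with t ht
      rw [ht]; ring
    · exact hxZ (hZ x hx (signChange_mul_cont (hQ.continuousAt (Icc_mem_nhds hx.1 hx.2))
        (hQnz x (Ioo_subset_Icc_self hx) hxZ) hsc))
  have hfin' : {t ∈ Icc a b | h t * Q t = 0}.Finite := by
    refine (hfin.union Z.finite_toSet).subset ?_
    rintro t ⟨ht, h0⟩
    rcases mul_eq_zero.mp h0 with h1 | h1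
    · exact Or.inl ⟨ht, h1⟩
    · refine Or.inr ?_
      by_contra hn
      exact hQnz t ht hn h1
  have hc : ContinuousOn (fun t => h t * Q t) (Icc a b) := hh.mul hQ
  rcases const_sign hc hfin' hno with hp | hp
  · exact integral_ne_zero_of_sign hμ hsub hinf hc hfin' hp
  · have := integral_ne_zero_of_sign hμ hsub hinf hc.neg (by simpa using hfin')
      (fun t ht => neg_nonneg.mpr (hp t ht))
    have e : ∫ t, (-fun t => h t * Q t) t ∂μ = - ∫ t, h t * Q t ∂μ := integral_neg _
    rw [e] at this
    exact neg_ne_zero.mp this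

lemma many_sign_changes {μ : Measure ℝ} [IsFiniteMeasure μ] {a b : ℝ}
    (hμ : μ (Icc a b)ᶜ = 0) (hsub : msupport μ ⊆ Icc a b) (hinf : (msupport μ).Infinite)
    {h : ℝ → ℝ} (hh : ContinuousOn h (Icc a b))
    (hfin : {t ∈ Icc a b | h t = 0}.Finite) (M : ℕ)
    (hM : ∀ Z : Finset ℝ, ↑Z ⊆ Ioo a b → Z.card < M → ∃ Q : ℝ → ℝ, ContinuousOn Q (Icc a b) ∧
      (∀ x ∈ Icc a b, x ∉ Z → Q x ≠ 0) ∧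
      (∀ x ∈ Z, ∃ u : ℝ → ℝ, ContinuousAt u x ∧ u x ≠ 0 ∧ ∀ᶠ t in 𝓝 x, Q t = (t - x) * u t) ∧
      ∫ t, h t * Q t ∂μ = 0) :
    ∃ S : Finset ℝ, ↑S ⊆ Ioo a b ∧ M ≤ S.card ∧ ∀ x ∈ S, SignChangeAt h x := by
  have hf2 : {t ∈ Ioo a b | SignChangeAt h t}.Finite := by
    refine hfin.subset ?_
    rintro t ⟨ht, hs⟩
    exact ⟨Ioo_subset_Icc_self ht, signChange_zero (hh.continuousAt (Icc_mem_nhds ht.1 ht.2)) hs⟩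
  have hIoo : ↑hf2.toFinset ⊆ Ioo a b := by
    rw [Set.Finite.coe_toFinset]
    exact fun x hx => hx.1
  refine ⟨hf2.toFinset, hIoo, ?_, by simp⟩
  by_contra hlt
  push Not at hlt
  obtain ⟨Q, hQ, hQnz, hQZ, h0⟩ := hM hf2.toFinset hIoo hlt
  exact core_ne_zero hμ hsub hinf hh hQ hfin hf2.toFinset (by simp; tauto) (by simp) hQnz hQZ h0

lemma nik_supp_sub {m : ℕ} (S : NikSys m) {j : ℕ} (hj : j ≤ m) :
    msupport (S.μ j) ⊆ Icc (S.a j) (S.b j) := by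
  rw [← S.hull j hj]; exact subset_convexHull ℝ _

lemma nik_null {m : ℕ} (S : NikSys m) {j : ℕ} (hj : j ≤ m) :
    S.μ j (Icc (S.a j) (S.b j))ᶜ = 0 := by
  apply measure_null_of_locally_null
  intro x hx
  have hxs : x ∉ msupport (S.μ j) := fun h => hx (nik_supp_sub S hj h)
  simp only [msupport, mem_ofPred_eq, not_forall, not_not] at hxs
  obtain ⟨U, hU, hxU, h0⟩ := hxs
  exact ⟨U, mem_nhdsWithin_of_mem_nhds (hU.mem_nhds hxU), h0⟩

lemma nik_disj {m : ℕ} (S : NikSys m) {j : ℕ} (hj : j < m) {t : ℝ}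
    (ht : t ∈ Icc (S.a j) (S.b j)) : (t : ℂ) ∉ cpx (Icc (S.a (j+1)) (S.b (j+1))) := by
  rintro ⟨u, hu, hut⟩
  have : u = t := by simpa using hut
  subst this
  have : u ∈ Icc (S.a j) (S.b j) ∩ Icc (S.a (j + 1)) (S.b (j + 1)) := ⟨ht, hu⟩
  rw [S.disj j hj] at this
  exact this

/-- The region of analyticity of the forms of index `j`. -/
def regS {m : ℕ} (S : NikSys m) (j : ℕ) : Set ℂ :=
  if j < m then (cpx (Icc (S.a (j+1)) (S.b (j+1))))ᶜ else univ

lemma regS_of_lt {m : ℕ} (S : NikSys m) {j : ℕ} (hj : j < m) :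
    regS S j = (cpx (Icc (S.a (j+1)) (S.b (j+1))))ᶜ := by simp [regS, hj]

lemma regS_open {m : ℕ} (S : NikSys m) (j : ℕ) : IsOpen (regS S j) := by
  unfold regS
  split_ifs
  · exact (cpx_closed _ _).isOpen_compl
  · exact isOpen_univ

lemma regS_real {m : ℕ} (S : NikSys m) {j : ℕ} {t : ℝ}
    (ht : t ∈ Icc (S.a j) (S.b j)) : (t : ℂ) ∈ regS S j := by
  unfold regS
  split_ifs with h
  · exact nik_disj S h ht
  · trivial

lemma regS_conj {m : ℕ} (S : NikSys m) {j : ℕ} {z : ℂ} (hz : z ∈ regS S j) :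
    conj z ∈ regS S j := by
  unfold regS at *
  split_ifs at * with h
  · rintro ⟨t, ht, htz⟩
    refine hz ⟨t, ht, ?_⟩
    have := congrArg conj htz
    simpa using this
  · trivial

lemma wt_self (μ : ℕ → Measure ℝ) (e : ℕ → ℝ) (j : ℕ) (z : ℂ) : wt μ e j j z = 1 := by
  simp [wt]

lemma wt_succ (μ : ℕ → Measure ℝ) (e : ℕ → ℝ) {j k : ℕ} (h : j < k) (z : ℂ) :
    wt μ e j k z = (e (j+1) : ℂ) * ∫ t, wt μ e (j+1) k (t : ℂ) / (z - (t : ℂ)) ∂(μ (j+1)) := by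
  obtain ⟨d, rfl⟩ : ∃ d, k = j + 1 + d := ⟨k - (j+1), by omega⟩
  cases d with
  | zero => simp [wt, nikhat]
  | succ d =>
    have h1 : j + 1 + (d + 1) - (j + 1) = d + 1 := by omega
    have h2 : j + 1 + (d + 1) - (j + 1 + 1) = d := by omega
    have h3 : j + 1 < j + 1 + (d + 1) := by omega
    simp only [wt, h, if_true, h1, nikhat, h2, h3]

lemma nikhat_conj (μ : ℕ → Measure ℝ) (e : ℕ → ℝ) (g : ℕ) : ∀ (j : ℕ) (z : ℂ),
    nikhat μ e j g (conj z) = conj (nikhat μ e j g z) := by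
  induction g with
  | zero =>
    intro j z
    simp only [nikhat, map_mul, Complex.conj_ofReal]
    rw [← integral_conj]
    simp
  | succ g ih =>
    intro j z
    simp only [nikhat, map_mul, Complex.conj_ofReal]
    rw [← integral_conj]
    congr 2
    funext t
    have := ih (j+1) (t : ℂ)
    rw [Complex.conj_ofReal] at this
    rw [map_div₀, ← this]
    simp

lemma wt_conj (μ : ℕ → Measure ℝ) (e : ℕ → ℝ) (j k : ℕ) (z : ℂ) :
    wt μ e j k (conj z) = conj (wt μ e j k z) := by
  unfold wt
  split_ifs
  · exact nikhat_conj _ _ _ _ _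
  · simp

lemma aeval_conj' (p : ℝ[X]) (z : ℂ) : aeval (conj z) p = conj (aeval z p) :=
  Polynomial.aeval_conj p z

lemma linForm_conj (μ : ℕ → Measure ℝ) (e : ℕ → ℝ) (m j : ℕ) (g : ℕ → ℝ[X]) (z : ℂ) :
    linForm μ e m j g (conj z) = conj (linForm μ e m j g z) := by
  unfold linForm
  rw [map_sum]
  refine Finset.sum_congr rfl fun k _ => ?_
  rw [map_mul, wt_conj, aeval_conj']

lemma linForm_real (μ : ℕ → Measure ℝ) (e : ℕ → ℝ) (m j : ℕ) (g : ℕ → ℝ[X]) (t : ℝ) :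
    ((linForm μ e m j g (t : ℂ)).re : ℂ) = linForm μ e m j g (t : ℂ) := by
  have := linForm_conj μ e m j g (t : ℂ)
  rw [Complex.conj_ofReal] at this
  exact Complex.conj_eq_iff_re.mp this.symm

lemma wt_diff {m : ℕ} (S : NikSys m) (d : ℕ) : ∀ j k : ℕ, k = j + 1 + d → k ≤ m →
    DifferentiableOn ℂ (wt S.μ S.e j k) (cpx (Icc (S.a (j+1)) (S.b (j+1))))ᶜ := by
  induction d with
  | zero =>
    intro j k hk hkm
    have hj : j < k := by omega
    have : wt S.μ S.e j k = fun z => (S.e (j+1) : ℂ) *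
        ∫ t, wt S.μ S.e (j+1) k (t : ℂ) / (z - (t : ℂ)) ∂(S.μ (j+1)) := by
      funext z; exact wt_succ _ _ hj z
    rw [this]
    have := S.fin (j+1)
    refine (cauchy_diff (nik_null S (by omega)) ?_).const_mul _
    have h2 : k = j + 1 := by omega
    subst h2
    simp only [wt_self]
    exact continuousOn_const
  | succ d ih =>
    intro j k hk hkm
    have hj : j < k := by omega
    have : wt S.μ S.e j k = fun z => (S.e (j+1) : ℂ) *
        ∫ t, wt S.μ S.e (j+1) k (t : ℂ) / (z - (t : ℂ)) ∂(S.μ (j+1)) := by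
      funext z; exact wt_succ _ _ hj z
    rw [this]
    have := S.fin (j+1)
    refine (cauchy_diff (nik_null S (by omega)) ?_).const_mul _
    have h3 := ih (j+1) k (by omega) hkm
    exact h3.continuousOn.comp (by fun_prop) (fun t ht => nik_disj S (by omega) ht)

lemma wt_diffOn {m : ℕ} (S : NikSys m) {j k : ℕ} (hjk : j ≤ k) (hk : k ≤ m) :
    DifferentiableOn ℂ (wt S.μ S.e j k) (regS S j) := by
  rcases hjk.eq_or_lt with h | h
  · subst h
    have : wt S.μ S.e j j = fun _ => 1 := by funext z; exact wt_self _ _ _ _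
    rw [this]; exact differentiableOn_const _
  · rw [regS_of_lt S (by omega)]
    exact wt_diff S (k - (j+1)) j k (by omega) hk

lemma wt_contOn {m : ℕ} (S : NikSys m) {j k : ℕ} (hjk : j ≤ k) (hk : k ≤ m) :
    ContinuousOn (fun t : ℝ => wt S.μ S.e j k (t : ℂ)) (Icc (S.a j) (S.b j)) :=
  (wt_diffOn S hjk hk).continuousOn.comp (by fun_prop) (fun _ ht => regS_real S ht)

lemma linForm_diffOn {m : ℕ} (S : NikSys m) (j : ℕ) (g : ℕ → ℝ[X]) :
    DifferentiableOn ℂ (linForm S.μ S.e m j g) (regS S j) := by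
  have : linForm S.μ S.e m j g = fun z => ∑ k ∈ Finset.Icc j m, aeval z (g k) * wt S.μ S.e j k z := by
    funext z; rfl
  rw [this]
  refine DifferentiableOn.fun_sum fun k hk => ?_
  rw [Finset.mem_Icc] at hk
  refine DifferentiableOn.mul ?_ (wt_diffOn S hk.1 hk.2)
  exact (g k).differentiable_aeval.differentiableOn

lemma linForm_analyticAt {m : ℕ} (S : NikSys m) {j : ℕ} (g : ℕ → ℝ[X]) {z : ℂ}
    (hz : z ∈ regS S j) : AnalyticAt ℂ (linForm S.μ S.e m j g) z :=
  (linForm_diffOn S j g).analyticAt ((regS_open S j).mem_nhds hz)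

lemma linForm_contOn {m : ℕ} (S : NikSys m) (j : ℕ) (g : ℕ → ℝ[X]) :
    ContinuousOn (fun t : ℝ => linForm S.μ S.e m j g (t : ℂ)) (Icc (S.a j) (S.b j)) :=
  (linForm_diffOn S j g).continuousOn.comp (by fun_prop) (fun _ ht => regS_real S ht)

lemma aeval_eq_map (p : ℝ[X]) (z : ℂ) : aeval z p = (p.map Complex.ofRealHom).eval z := by
  rw [eval_map, aeval_def]; rfl

lemma linForm_split {m : ℕ} (S : NikSys m) {j : ℕ} (hj : j < m) (g : ℕ → ℝ[X]) (z : ℂ) :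
    linForm S.μ S.e m j g z = aeval z (g j) +
      ∑ k ∈ Finset.Icc (j+1) m, aeval z (g k) * wt S.μ S.e j k z := by
  unfold linForm
  rw [← Finset.insert_Icc_add_one_left_eq_Icc hj.le, Finset.sum_insert (by simp), wt_self, mul_one]

/-- The form of index `j` as polynomial plus Cauchy transform of the form of index `j+1`. -/
lemma linForm_decomp {m : ℕ} (S : NikSys m) {j : ℕ} (hj : j < m) (g : ℕ → ℝ[X]) (n : ℕ)
    (hdeg : ∀ i, j ≤ i → i ≤ m → (g i).degree < (n : WithBot ℕ)) :
    ∃ P : ℂ[X], P.degree < (n : WithBot ℕ) ∧ ∀ z ∉ cpx (Icc (S.a (j+1)) (S.b (j+1))),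
      linForm S.μ S.e m j g z = P.eval z +
        ∫ t, ((S.e (j+1) : ℂ) * linForm S.μ S.e m (j+1) g (t : ℂ)) / (z - (t : ℂ)) ∂(S.μ (j+1)) := by
  have := S.fin (j+1)
  have hnull := nik_null S (show j + 1 ≤ m by omega)
  have hmap : ∀ i, j ≤ i → i ≤ m → ((g i).map Complex.ofRealHom).degree < (n : WithBot ℕ) :=
    fun i h1 h2 => (degree_map_le).trans_lt (hdeg i h1 h2)
  have hex : ∀ i : ℕ, ∃ P : ℂ[X], (j + 1 ≤ i → i ≤ m → P.degree < (n : WithBot ℕ) ∧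
      ∀ z ∉ cpx (Icc (S.a (j+1)) (S.b (j+1))), ((g i).map Complex.ofRealHom).eval z *
        ∫ t, wt S.μ S.e (j+1) i (t : ℂ) / (z - (t : ℂ)) ∂(S.μ (j+1)) = P.eval z +
        ∫ t, ((g i).map Complex.ofRealHom).eval (t : ℂ) * wt S.μ S.e (j+1) i (t : ℂ) /
          (z - (t : ℂ)) ∂(S.μ (j+1))) := by
    intro i
    by_cases h : j + 1 ≤ i ∧ i ≤ m
    · obtain ⟨P, h1, h2⟩ := poly_mul_cauchy hnull (wt_contOn S h.1 h.2) n _ (hmap i (by omega) h.2)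
      exact ⟨P, fun _ _ => ⟨h1, h2⟩⟩
    · exact ⟨0, fun h1 h2 => absurd ⟨h1, h2⟩ h⟩
  choose P hP using hex
  refine ⟨(g j).map Complex.ofRealHom + ∑ i ∈ Finset.Icc (j+1) m, C (S.e (j+1) : ℂ) * P i, ?_, ?_⟩
  · rw [← mem_degreeLT]
    refine Submodule.add_mem _ (mem_degreeLT.mpr (hmap j le_rfl hj.le)) (Submodule.sum_mem _ ?_)
    intro i hi
    rw [Finset.mem_Icc] at hi
    rw [← smul_eq_C_mul]
    exact Submodule.smul_mem _ _ (mem_degreeLT.mpr (hP i hi.1 hi.2).1)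
  · intro z hz
    rw [linForm_split S hj, eval_add, eval_finsetSum, add_assoc, aeval_eq_map]
    congr 1
    have e1 : ∫ t, ((S.e (j+1) : ℂ) * linForm S.μ S.e m (j+1) g (t : ℂ)) / (z - (t : ℂ)) ∂(S.μ (j+1))
        = ∑ i ∈ Finset.Icc (j+1) m, (S.e (j+1) : ℂ) *
          ∫ t, ((g i).map Complex.ofRealHom).eval (t : ℂ) * wt S.μ S.e (j+1) i (t : ℂ) /
          (z - (t : ℂ)) ∂(S.μ (j+1)) := by
      simp_rw [← integral_const_mul]
      rw [← integral_finsetSum]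
      · congr 1
        funext t
        unfold linForm
        rw [Finset.mul_sum, Finset.sum_div]
        refine Finset.sum_congr rfl fun i _ => ?_
        rw [aeval_eq_map]; ring
      · intro i hi
        rw [Finset.mem_Icc] at hi
        refine Integrable.const_mul ?_ _
        refine intg_of_contOn hnull (cauchy_contOn (ContinuousOn.mul ?_ (wt_contOn S hi.1 hi.2)) hz)
        fun_prop
    rw [e1, ← Finset.sum_add_distrib]
    refine Finset.sum_congr rfl fun i hi => ?_
    rw [Finset.mem_Icc] at hi
    have h := (hP i hi.1 hi.2).2 z hz
    rw [wt_succ _ _ (show j < i by omega), eval_mul, eval_C, aeval_eq_map]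
    linear_combination (S.e (j+1) : ℂ) * h

lemma linForm_top {m : ℕ} (S : NikSys m) (j : ℕ) (hj : j ≤ m) (g : ℕ → ℝ[X])
    (h0 : ∀ i, j < i → i ≤ m → g i = 0) (z : ℂ) :
    linForm S.μ S.e m j g z = aeval z (g j) := by
  unfold linForm
  rw [Finset.sum_eq_single j]
  · rw [wt_self, mul_one]
  · intro k hk hkj
    rw [Finset.mem_Icc] at hk
    rw [h0 k (by omega) hk.2]; simp
  · intro h; simp at h; omega

lemma analyticAt_conj_conj {g : ℂ → ℂ} {z : ℂ} (hg : AnalyticAt ℂ g z) :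
    AnalyticAt ℂ (fun w => conj (g (conj w))) (conj z) := by
  rw [Complex.analyticAt_iff_eventually_differentiableAt] at hg ⊢
  have ht : Tendsto (fun w : ℂ => conj w) (𝓝 (conj z)) (𝓝 z) := by
    have := Complex.continuous_conj.tendsto (conj z)
    rwa [Complex.conj_conj] at this
  filter_upwards [ht.eventually hg] with w hw
  have h := hw.conj_conj
  rw [Complex.conj_conj] at h
  exact h

lemma order_conj {F : ℂ → ℂ} (hF : ∀ z, F (conj z) = conj (F z)) {z : ℂ} (hz : AnalyticAt ℂ F z)
    (hz' : AnalyticAt ℂ F (conj z)) {n : ℕ} (h : (n : ℕ∞) ≤ analyticOrderAt F z) :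
    (n : ℕ∞) ≤ analyticOrderAt F (conj z) := by
  rw [natCast_le_analyticOrderAt hz] at h
  rw [natCast_le_analyticOrderAt hz']
  obtain ⟨g, hg, hev⟩ := h
  refine ⟨_, analyticAt_conj_conj hg, ?_⟩
  have ht : Tendsto (fun w : ℂ => conj w) (𝓝 (conj z)) (𝓝 z) := by
    have := Complex.continuous_conj.tendsto (conj z)
    rwa [Complex.conj_conj] at this
  filter_upwards [ht.eventually hev] with w hw
  have := hF (conj w)
  rw [Complex.conj_conj, hw] at this
  rw [this]
  simp

/-- `s` is a multiset of zeros of the form of index `j`. -/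
def ZM {m : ℕ} (S : NikSys m) (j : ℕ) (g : ℕ → ℝ[X]) (s : Multiset ℂ) : Prop :=
  (∀ w ∈ s, w ∈ regS S j) ∧
  ∀ w ∈ s, (s.count w : ℕ∞) ≤ analyticOrderAt (linForm S.μ S.e m j g) w

lemma one_le_order {F : ℂ → ℂ} {z : ℂ} (hz : AnalyticAt ℂ F z) (h0 : F z = 0) :
    1 ≤ analyticOrderAt F z := by
  rw [Order.one_le_iff_ne_zero]
  exact hz.analyticOrderAt_ne_zero.mpr h0

lemma ZM_nodup {m : ℕ} (S : NikSys m) (j : ℕ) (g : ℕ → ℝ[X]) (s : Multiset ℂ) (hs : s.Nodup)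
    (h : ∀ w ∈ s, w ∈ regS S j ∧ linForm S.μ S.e m j g w = 0) : ZM S j g s := by
  refine ⟨fun w hw => (h w hw).1, fun w hw => ?_⟩
  rw [Multiset.count_eq_one_of_mem hs hw]
  exact_mod_cast one_le_order (linForm_analyticAt S g (h w hw).1) (h w hw).2

lemma ZM_symm {m : ℕ} (S : NikSys m) (j : ℕ) (g : ℕ → ℝ[X]) (s : Multiset ℂ) (h : ZM S j g s) :
    ∃ s' : Multiset ℂ, ZM S j g s' ∧ s.card ≤ s'.card ∧ s'.map conj = s' := by
  have hinj : Function.Injective (fun z : ℂ => conj z) := (starRingEnd ℂ).injective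
  have hcount : ∀ (s : Multiset ℂ) (w : ℂ), (s.map (fun z => conj z)).count w = s.count (conj w) := by
    intro s w
    have := Multiset.count_map_eq_count' (fun z : ℂ => conj z) s hinj (conj w)
    simpa using this
  refine ⟨s ∪ s.map (fun z => conj z), ⟨?_, ?_⟩, Multiset.card_le_card Multiset.le_union_left, ?_⟩
  · intro w hw
    rcases Multiset.mem_union.mp hw with h1 | h1
    · exact h.1 w h1
    · obtain ⟨v, hv, rfl⟩ := Multiset.mem_map.mp h1
      exact regS_conj S (h.1 v hv)
  · intro w hw
    have hwr : w ∈ regS S j := by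
      rcases Multiset.mem_union.mp hw with h1 | h1
      · exact h.1 w h1
      · obtain ⟨v, hv, rfl⟩ := Multiset.mem_map.mp h1
        exact regS_conj S (h.1 v hv)
    have h1 : (s.count w : ℕ∞) ≤ analyticOrderAt (linForm S.μ S.e m j g) w := by
      by_cases hws : w ∈ s
      · exact h.2 w hws
      · rw [Multiset.count_eq_zero_of_notMem hws]; simp
    have h2 : (s.count (conj w) : ℕ∞) ≤ analyticOrderAt (linForm S.μ S.e m j g) w := by
      by_cases hws : conj w ∈ s
      · have := order_conj (linForm_conj S.μ S.e m j g) (linForm_analyticAt S g (regS_conj S hwr))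
          (by rw [Complex.conj_conj]; exact linForm_analyticAt S g hwr) (h.2 _ hws)
        rwa [Complex.conj_conj] at this
      · rw [Multiset.count_eq_zero_of_notMem hws]; simp
    rw [Multiset.count_union, hcount]
    rcases max_choice (s.count w) (s.count (conj w)) with hm | hm <;> rw [hm] <;> assumption
  · ext w
    have e := hcount (s ∪ s.map (fun z => conj z)) w
    rw [e, Multiset.count_union, Multiset.count_union, hcount, hcount, Complex.conj_conj, max_comm]

/-- Zeros of the form of index `j` give sign changes of the form of index `j+1`. -/
lemma step_lemma {m : ℕ} (S : NikSys m) {j : ℕ} (hj : j < m) (g : ℕ → ℝ[X]) (n : ℕ)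
    (hdeg : ∀ i, j ≤ i → i ≤ m → (g i).degree < (n : WithBot ℕ))
    (s : Multiset ℂ) (hs : ZM S j g s) (hconj : s.map conj = s)
    (hfin : {t ∈ Icc (S.a (j+1)) (S.b (j+1)) |
      (linForm S.μ S.e m (j+1) g ((t : ℝ) : ℂ)).re = 0}.Finite) :
    ∃ T : Finset ℝ, ↑T ⊆ Ioo (S.a (j+1)) (S.b (j+1)) ∧ s.card - n ≤ T.card ∧
      ∀ x ∈ T, SignChangeAt (fun t : ℝ => (linForm S.μ S.e m (j+1) g (t : ℂ)).re) x := by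
  have := S.fin (j+1)
  have hj1 : j + 1 ≤ m := hj
  have hnull := nik_null S hj1
  obtain ⟨P, hP, hdec⟩ := linForm_decomp S hj g n hdeg
  have hsr : ∀ w ∈ s, w ∉ cpx (Icc (S.a (j+1)) (S.b (j+1))) := by
    intro w hw
    have := hs.1 w hw
    rwa [regS_of_lt S hj] at this
  have hLc := linForm_contOn S (j+1) g
  have hhc : ContinuousOn (fun t : ℝ => (linForm S.μ S.e m (j+1) g (t : ℂ)).re)
      (Icc (S.a (j+1)) (S.b (j+1))) := Complex.continuous_re.comp_continuousOn hLc
  have horth := orth_of_zeros hnull s n P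
    (fun t => (S.e (j+1) : ℂ) * linForm S.μ S.e m (j+1) g (t : ℂ)) (linForm S.μ S.e m j g)
    (continuousOn_const.mul hLc) hP hdec hsr hs.2
  set W : ℝ → ℂ := fun t => (s.map (fun w => (t : ℂ) - w)).prod with hW
  have hWreal : ∀ t, ((W t).re : ℂ) = W t := by
    intro t
    apply Complex.conj_eq_iff_re.mp
    rw [hW]
    simp only
    rw [map_multiset_prod, Multiset.map_map]
    conv_rhs => rw [← hconj, Multiset.map_map]
    simp
  have hWc : Continuous fun t => (W t).re := Complex.continuous_re.comp (prod_sub_cont s)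
  have hWnz : ∀ t ∈ Icc (S.a (j+1)) (S.b (j+1)), (W t).re ≠ 0 := by
    intro t ht h0
    have h1 := prod_sub_ne_zero hsr ht
    apply h1
    have := hWreal t
    rw [h0, Complex.ofReal_zero] at this
    exact this.symm
  refine many_sign_changes hnull (nik_supp_sub S hj1) (S.inf _ hj1) hhc hfin _ ?_
  intro Z hZ hcard
  have hqd : (∏ z ∈ Z, (X - C z)).natDegree = Z.card := natDegree_finsetProd_X_sub_C_eq_card Z (fun z => z)
  have hqe : ∀ t, (∏ z ∈ Z, (X - C z)).eval t = ∏ z ∈ Z, (t - z) := by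
    intro t; simp [eval_prod]
  refine ⟨fun t => (∏ z ∈ Z, (t - z)) * (W t).re⁻¹, ?_, ?_, ?_, ?_⟩
  · refine ContinuousOn.mul (by fun_prop) (hWc.continuousOn.inv₀ hWnz)
  · intro x hx hxZ
    refine mul_ne_zero (Finset.prod_ne_zero_iff.mpr fun z hz h0 => ?_) (inv_ne_zero (hWnz x hx))
    rw [sub_eq_zero] at h0
    exact hxZ (h0 ▸ hz)
  · intro x hx
    refine ⟨fun t => (∏ z ∈ Z.erase x, (t - z)) * (W t).re⁻¹, ?_, ?_, ?_⟩
    · refine ContinuousAt.mul (by fun_prop) (hWc.continuousAt.inv₀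
        (hWnz x (Ioo_subset_Icc_self (hZ hx))))
    · refine mul_ne_zero (Finset.prod_ne_zero_iff.mpr fun z hz h0 => ?_)
        (inv_ne_zero (hWnz x (Ioo_subset_Icc_self (hZ hx))))
      rw [sub_eq_zero] at h0
      rw [Finset.mem_erase] at hz
      exact hz.1 h0.symm
    · filter_upwards with t
      rw [← Finset.mul_prod_erase Z _ hx]; ring
  · have h := horth ((∏ z ∈ Z, (X - C z)).map Complex.ofRealHom) (by
      rw [natDegree_map, hqd]; omega)
    have e : ∀ t : ℝ, ((∏ z ∈ Z, (X - C z)).map Complex.ofRealHom).eval (t : ℂ) *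
        ((S.e (j+1) : ℂ) * linForm S.μ S.e m (j+1) g (t : ℂ)) /
          (s.map (fun w => (t : ℂ) - w)).prod =
        ((S.e (j+1) * ((linForm S.μ S.e m (j+1) g (t : ℂ)).re *
          ((∏ z ∈ Z, (t - z)) * (W t).re⁻¹)) : ℝ) : ℂ) := by
      intro t
      have h1 : ((∏ z ∈ Z, (X - C z)).map Complex.ofRealHom).eval (t : ℂ) =
          ((∏ z ∈ Z, (t - z) : ℝ) : ℂ) := by
        rw [← hqe t]
        exact eval_map_apply Complex.ofRealHom t
      rw [h1]
      change _ / W t = _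
      push_cast
      rw [hWreal, linForm_real]
      ring
    simp only [e] at h
    rw [integral_complex_ofReal, integral_const_mul] at h
    have h2 : S.e (j+1) ≠ 0 := by
      rcases S.sgn (j+1) with h | h <;> rw [h] <;> norm_num
    have h3 := Complex.ofReal_eq_zero.mp h
    exact (mul_eq_zero.mp h3).resolve_left h2

lemma zeros_finite {m : ℕ} (S : NikSys m) (j : ℕ) (g : ℕ → ℝ[X]) (B : ℕ)
    (h : ∀ s, ZM S j g s → s.card < B) :
    {z ∈ regS S j | linForm S.μ S.e m j g z = 0}.Finite := by
  by_contra hinf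
  obtain ⟨t, ht, htc⟩ := Set.Infinite.exists_subset_card_eq hinf B
  have := h t.val (ZM_nodup S j g t.val t.nodup (fun w hw => ht hw))
  rw [Finset.card_val, htc] at this
  exact lt_irrefl _ this

lemma real_zeros_finite {m : ℕ} (S : NikSys m) (j : ℕ) (g : ℕ → ℝ[X]) (B : ℕ)
    (h : ∀ s, ZM S j g s → s.card < B) :
    {t ∈ Icc (S.a j) (S.b j) | (linForm S.μ S.e m j g ((t : ℝ) : ℂ)).re = 0}.Finite := by
  refine ((zeros_finite S j g B h).preimage (f := fun t : ℝ => (t : ℂ))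
    (Complex.ofReal_injective.injOn)).subset ?_
  rintro t ⟨ht, h0⟩
  refine ⟨regS_real S ht, ?_⟩
  simp only
  rw [← linForm_real, h0]; simp

lemma signChange_form_zero {m : ℕ} (S : NikSys m) {j : ℕ} (g : ℕ → ℝ[X]) {x : ℝ}
    (hx : x ∈ Ioo (S.a j) (S.b j))
    (h : SignChangeAt (fun t : ℝ => (linForm S.μ S.e m j g (t : ℂ)).re) x) :
    linForm S.μ S.e m j g (x : ℂ) = 0 := by
  have hc : ContinuousOn (fun t : ℝ => (linForm S.μ S.e m j g (t : ℂ)).re)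
      (Icc (S.a j) (S.b j)) := Complex.continuous_re.comp_continuousOn (linForm_contOn S j g)
  have := signChange_zero (hc.continuousAt (Icc_mem_nhds hx.1 hx.2)) h
  rw [← linForm_real, this]; simp

lemma ZM_of_signChanges {m : ℕ} (S : NikSys m) {j : ℕ} (g : ℕ → ℝ[X]) (T : Finset ℝ)
    (hT : ↑T ⊆ Ioo (S.a j) (S.b j))
    (h : ∀ x ∈ T, SignChangeAt (fun t : ℝ => (linForm S.μ S.e m j g (t : ℂ)).re) x) :
    ZM S j g (T.val.map (fun x : ℝ => (x : ℂ))) := by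
  refine ZM_nodup S j g _ (T.nodup.map Complex.ofReal_injective) ?_
  intro w hw
  obtain ⟨x, hx, rfl⟩ := Multiset.mem_map.mp hw
  exact ⟨regS_real S (Ioo_subset_Icc_self (hT hx)), signChange_form_zero S g (hT hx) (h x hx)⟩

/-- The zero-counting theorem for forms on a Nikishin system. -/
lemma zero_count {m : ℕ} (S : NikSys m) (d : ℕ) : ∀ (j : ℕ), j + d = m → ∀ (g : ℕ → ℝ[X]) (N : ℕ → ℕ),
    (∀ i, j ≤ i → i ≤ m → (g i).degree < (N i : WithBot ℕ)) →
    (∀ i i', j ≤ i → i ≤ i' → i' ≤ m → N i' ≤ N i) →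
    (∃ i, j ≤ i ∧ i ≤ m ∧ g i ≠ 0) →
    ∀ s, ZM S j g s → s.card < ∑ i ∈ Finset.Icc j m, N i := by
  have poly_case : ∀ j ≤ m, ∀ (g : ℕ → ℝ[X]) (N : ℕ → ℕ), (g j).degree < (N j : WithBot ℕ) →
      (∀ i, j < i → i ≤ m → g i = 0) → g j ≠ 0 → ∀ s, ZM S j g s →
      s.card < ∑ i ∈ Finset.Icc j m, N i := by
    intro j hj g N hdeg h0 hne s hs
    have hF : linForm S.μ S.e m j g = fun z => ((g j).map Complex.ofRealHom).eval z := by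
      funext z
      rw [linForm_top S j hj g h0, aeval_eq_map]
    have h1 := poly_zeros s ((g j).map Complex.ofRealHom)
      ((Polynomial.map_ne_zero_iff Complex.ofRealHom.injective).mpr hne) (by rw [← hF]; exact hs.2)
    rw [natDegree_map] at h1
    rw [degree_eq_natDegree hne] at hdeg
    have h2 : (g j).natDegree < N j := by exact_mod_cast hdeg
    have h3 : N j ≤ ∑ i ∈ Finset.Icc j m, N i :=
      Finset.single_le_sum (fun _ _ => Nat.zero_le _) (by simp [hj])
    omega
  induction d with
  | zero =>
    intro j hj g N hdeg _ hne s hs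
    have hjm : j = m := by omega
    subst hjm
    obtain ⟨i, h1, h2, h3⟩ := hne
    have : i = j := by omega
    subst this
    exact poly_case i le_rfl g N (hdeg i le_rfl le_rfl) (fun i' h h' => by omega) h3 s hs
  | succ d ih =>
    intro j hj g N hdeg hN hne s hs
    by_cases hz : ∀ i, j < i → i ≤ m → g i = 0
    · obtain ⟨i, h1, h2, h3⟩ := hne
      have : i = j := by
        by_contra hij
        exact h3 (hz i (by omega) h2)
      subst this
      exact poly_case i h2 g N (hdeg i le_rfl h2) hz h3 s hs
    · push Not at hz
      obtain ⟨i, h1, h2, h3⟩ := hz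
      have IH := ih (j+1) (by omega) g N (fun i h h' => hdeg i (by omega) h')
        (fun i i' h h' h'' => hN i i' (by omega) h' h'') ⟨i, h1, h2, h3⟩
      obtain ⟨s', hs', hcard, hconj⟩ := ZM_symm S j g s hs
      obtain ⟨T, hT, hTc, hTs⟩ := step_lemma S (show j < m by omega) g (N j)
        (fun i h h' => (hdeg i h h').trans_le (by exact_mod_cast hN j i le_rfl h h')) s' hs' hconj
        (real_zeros_finite S (j+1) g _ IH)
      have h4 := IH _ (ZM_of_signChanges S g T hT hTs)
      rw [Multiset.card_map, Finset.card_val] at h4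
      rw [← Finset.insert_Icc_add_one_left_eq_Icc (show j ≤ m by omega), Finset.sum_insert (by simp)]
      omega

lemma ZM_cons {m : ℕ} (S : NikSys m) {j : ℕ} {g : ℕ → ℝ[X]} {s : Multiset ℂ} (hs : ZM S j g s)
    {w : ℂ} (hw : w ∈ regS S j)
    (ho : ((s.count w + 1 : ℕ) : ℕ∞) ≤ analyticOrderAt (linForm S.μ S.e m j g) w) :
    ZM S j g (w ::ₘ s) := by
  classical
  refine ⟨?_, ?_⟩
  · intro v hv
    rcases Multiset.mem_cons.mp hv with rfl | hv
    · exact hw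
    · exact hs.1 v hv
  · intro v hv
    by_cases hvw : v = w
    · subst hvw
      rw [Multiset.count_cons_self]
      exact ho
    · rw [Multiset.count_cons_of_ne hvw]
      rcases Multiset.mem_cons.mp hv with h | hv
      · exact absurd h hvw
      · exact hs.2 v hv

lemma real_factor {F : ℂ → ℂ} (hF : ∀ t : ℝ, ((F (t : ℂ)).re : ℂ) = F (t : ℂ)) {x : ℝ}
    (hx : AnalyticAt ℂ F (x : ℂ)) {n : ℕ} (ho : analyticOrderAt F (x : ℂ) = n) :
    ∃ u : ℝ → ℝ, ContinuousAt u x ∧ u x ≠ 0 ∧ ∀ᶠ t : ℝ in 𝓝 x, (F (t : ℂ)).re = (t - x) ^ n * u t := by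
  obtain ⟨g, hg, hg0, hev⟩ := (hx.analyticOrderAt_eq_natCast).mp ho
  have hcast : Tendsto (fun t : ℝ => (t : ℂ)) (𝓝 x) (𝓝 (x : ℂ)) :=
    Complex.continuous_ofReal.continuousAt
  have hev' : ∀ᶠ t : ℝ in 𝓝 x, F (t : ℂ) = (((t - x) ^ n : ℝ) : ℂ) * g (t : ℂ) := by
    filter_upwards [hcast.eventually hev] with t ht
    rw [ht]; push_cast; simp
  have hgc : ContinuousAt (fun t : ℝ => g (t : ℂ)) x :=
    ContinuousAt.comp (f := fun t : ℝ => (t : ℂ)) hg.continuousAt hcast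
  have him : (g (x : ℂ)).im = 0 := by
    have h1 : Tendsto (fun t : ℝ => (g (t : ℂ)).im) (𝓝[≠] x) (𝓝 (g (x : ℂ)).im) :=
      ((Complex.continuous_im.continuousAt.comp hgc).tendsto).mono_left nhdsWithin_le_nhds
    have h2 : ∀ᶠ t : ℝ in 𝓝[≠] x, (g (t : ℂ)).im = 0 := by
      filter_upwards [hev'.filter_mono nhdsWithin_le_nhds, self_mem_nhdsWithin] with t ht htx
      have hr := hF t
      have : (F (t : ℂ)).im = 0 := by rw [← hr]; simp
      rw [ht, Complex.im_ofReal_mul] at this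
      rcases mul_eq_zero.mp this with h | h
      · exact absurd (sub_eq_zero.mp (eq_zero_of_pow_eq_zero h)) htx
      · exact h
    exact tendsto_nhds_unique h1 ((tendsto_congr' h2).mpr tendsto_const_nhds)
  refine ⟨fun t => (g (t : ℂ)).re, Complex.continuous_re.continuousAt.comp hgc, ?_, ?_⟩
  · intro h
    exact hg0 (Complex.ext h him)
  · filter_upwards [hev'] with t ht
    rw [ht, Complex.re_ofReal_mul]

lemma decr_anti {m : ℕ} {n : ℕ → ℕ} (h : Decr m n) : ∀ i i', i ≤ i' → i' ≤ m → n i' ≤ n i := by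
  intro i i' hii
  induction i', hii using Nat.le_induction with
  | base => intro _; exact le_rfl
  | succ k hk ih => intro hm; exact (h k (by omega)).trans (ih (by omega))

lemma trunc_index {m : ℕ} {n : ℕ → ℕ} (h : Decr m n) {r : ℕ} (hr : r ≤ msum m n) :
    ∃ n' : ℕ → ℕ, (∀ k, n' k ≤ n k) ∧ (∀ i i', i ≤ i' → i' ≤ m → n' i' ≤ n' i) ∧
      ∑ k ∈ Finset.range (m + 1), n' k = r := by
  refine ⟨fun j => min (n j) (r - ∑ i ∈ Finset.range j, n i), fun k => min_le_left _ _, ?_, ?_⟩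
  · intro i i' hii hm
    have h1 := decr_anti h i i' hii hm
    have h2 : ∑ l ∈ Finset.range i, n l ≤ ∑ l ∈ Finset.range i', n l :=
      Finset.sum_le_sum_of_subset (Finset.range_mono hii)
    simp only
    omega
  · have key : ∀ J, ∑ k ∈ Finset.range J, min (n k) (r - ∑ i ∈ Finset.range k, n i) =
        min (∑ k ∈ Finset.range J, n k) r := by
      intro J
      induction J with
      | zero => simp
      | succ J ih => rw [Finset.sum_range_succ, Finset.sum_range_succ, ih]; omega
    rw [key]
    exact min_eq_right hr

lemma wt_real (μ : ℕ → Measure ℝ) (e : ℕ → ℝ) (j k : ℕ) (t : ℝ) :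
    ((wt μ e j k (t : ℂ)).re : ℂ) = wt μ e j k (t : ℂ) := by
  apply Complex.conj_eq_iff_re.mp
  rw [← wt_conj, Complex.conj_ofReal]

lemma linForm_re {μ : ℕ → Measure ℝ} {e : ℕ → ℝ} {m : ℕ} (q : ℕ → ℝ[X]) (t : ℝ) :
    (linForm μ e m 0 q (t : ℂ)).re =
      ∑ k ∈ Finset.range (m + 1), (q k).eval t * (wt μ e 0 k (t : ℂ)).re := by
  unfold linForm
  rw [Complex.re_sum]
  refine Finset.sum_congr (by ext; simp) fun k _ => ?_
  have : aeval (t : ℂ) (q k) = (((q k).eval t : ℝ) : ℂ) := by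
    rw [Polynomial.aeval_def, ← Complex.coe_algebraMap, Polynomial.eval₂_at_apply]
  rw [this, Complex.re_ofReal_mul]

lemma exists_interp (μ : ℕ → Measure ℝ) (e : ℕ → ℝ) (m : ℕ) (n : ℕ → ℕ) (Z : Finset ℝ)
    (hZ : Z.card < ∑ k ∈ Finset.range (m + 1), n k) :
    ∃ q : ℕ → ℝ[X], (∀ k ≤ m, (q k).degree < (n k : WithBot ℕ)) ∧ (∃ k ≤ m, q k ≠ 0) ∧
      ∀ z ∈ Z, linForm μ e m 0 q ((z : ℝ) : ℂ) = 0 := by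
  let L : ((k : Fin (m + 1)) → degreeLT ℝ (n k)) →ₗ[ℝ] (Z → ℝ) :=
    LinearMap.pi fun z => ∑ k : Fin (m + 1), (wt μ e 0 k ((z : ℝ) : ℂ)).re •
      ((leval (z : ℝ)).comp ((degreeLT ℝ (n k)).subtype.comp (LinearMap.proj k)))
  have : ∀ k : ℕ, Module.Finite ℝ (degreeLT ℝ k) := fun k =>
    Module.Finite.equiv (degreeLTEquiv ℝ k).symm
  have hker : LinearMap.ker L ≠ ⊥ := by
    apply LinearMap.ker_ne_bot_of_finrank_lt
    rw [Module.finrank_fintype_fun_eq_card, Fintype.card_coe, Module.finrank_pi_fintype]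
    have : ∀ k : ℕ, Module.finrank ℝ (degreeLT ℝ k) = k := fun k => by
      rw [(degreeLTEquiv ℝ k).finrank_eq]; simp
    rw [Finset.sum_congr rfl fun (k : Fin (m + 1)) _ => this (n k)]
    rw [Finset.sum_range] at hZ
    exact hZ
  obtain ⟨v, hv, hv0⟩ := Submodule.exists_mem_ne_zero_of_ne_bot hker
  refine ⟨fun i => if h : i < m + 1 then (v ⟨i, h⟩ : ℝ[X]) else 0, ?_, ?_, ?_⟩
  · intro k hk
    simp only [Nat.lt_succ_of_le hk, dif_pos]
    exact mem_degreeLT.mp (v ⟨k, Nat.lt_succ_of_le hk⟩).2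
  · by_contra! hcon
    apply hv0
    funext k
    have := hcon k (Nat.lt_succ_iff.mp k.2)
    simp only [k.2, dif_pos] at this
    exact Subtype.ext this
  · intro z hz
    rw [← linForm_real, linForm_re, Finset.sum_range]
    have h1 : L v ⟨z, hz⟩ = 0 := by
      rw [LinearMap.mem_ker.mp hv]; rfl
    rw [← Complex.ofReal_zero, ← h1]
    congr 1
    simp only [L, LinearMap.pi_apply, LinearMap.sum_apply, LinearMap.smul_apply,
      LinearMap.comp_apply, LinearMap.proj_apply, Submodule.subtype_apply, leval_apply, smul_eq_mul]
    refine Finset.sum_congr rfl fun k _ => ?_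
    rw [dif_pos k.2, mul_comm]

lemma ZM_real {m : ℕ} (S : NikSys m) {j : ℕ} (g : ℕ → ℝ[X]) (T : Finset ℝ)
    (hT : ↑T ⊆ Ioo (S.a j) (S.b j))
    (h : ∀ x ∈ T, linForm S.μ S.e m j g ((x : ℝ) : ℂ) = 0) :
    ZM S j g (T.val.map (fun x : ℝ => (x : ℂ))) := by
  apply ZM_nodup
  · exact T.nodup.map Complex.ofReal_injective
  · intro w hw
    obtain ⟨x, hx, rfl⟩ := Multiset.mem_map.mp hw
    exact ⟨regS_real S (Ioo_subset_Icc_self (hT hx)), h x hx⟩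

lemma count_real_mem {T : Finset ℝ} {x : ℝ} (hx : x ∈ T) :
    (T.val.map (fun x : ℝ => (x : ℂ))).count (x : ℂ) = 1 :=
  Multiset.count_eq_one_of_mem (T.nodup.map Complex.ofReal_injective)
    (Multiset.mem_map.mpr ⟨x, hx, rfl⟩)

lemma count_real_not_mem {T : Finset ℝ} {x : ℝ} (hx : x ∉ T) :
    (T.val.map (fun x : ℝ => (x : ℂ))).count (x : ℂ) = 0 := by
  apply Multiset.count_eq_zero_of_notMem
  intro h
  obtain ⟨y, hy, hxy⟩ := Multiset.mem_map.mp h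
  exact hx (Complex.ofReal_injective hxy ▸ hy)

lemma exists_Q {m : ℕ} (S : NikSys m) {n : ℕ → ℕ} (hn : Decr m n) (Z : Finset ℝ)
    (hZ : ↑Z ⊆ Ioo (S.a 0) (S.b 0)) (hcard : Z.card < msum m n) :
    ∃ q : ℕ → ℝ[X], (∀ k ≤ m, (q k).degree < (n k : WithBot ℕ)) ∧
      (∀ x ∈ Icc (S.a 0) (S.b 0), x ∉ Z → (linForm S.μ S.e m 0 q (x : ℂ)).re ≠ 0) ∧
      (∀ x ∈ Z, ∃ u : ℝ → ℝ, ContinuousAt u x ∧ u x ≠ 0 ∧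
        ∀ᶠ t in 𝓝 x, (linForm S.μ S.e m 0 q ((t : ℝ) : ℂ)).re = (t - x) * u t) := by
  obtain ⟨n', hle, hanti, hsum⟩ := trunc_index hn (r := Z.card + 1) hcard
  obtain ⟨q, hq, ⟨k0, hk0, hqk0⟩, hqZ⟩ := exists_interp S.μ S.e m n' Z (by omega)
  have hIcc : ∑ i ∈ Finset.Icc 0 m, n' i = Z.card + 1 := by
    rw [← hsum]; exact Finset.sum_congr (by ext; simp) fun _ _ => rfl
  have hcount := zero_count S m 0 (by omega) q n' (fun i _ hi => hq i hi)
    (fun i i' _ h1 h2 => hanti i i' h1 h2) ⟨k0, by omega, hk0, hqk0⟩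
  rw [hIcc] at hcount
  have hZM := ZM_real S q Z hZ hqZ
  have hbad : ∀ w, w ∈ regS S 0 → ¬ (((Z.val.map (fun x : ℝ => (x : ℂ))).count w + 1 : ℕ) : ℕ∞) ≤
      analyticOrderAt (linForm S.μ S.e m 0 q) w := by
    intro w hw ho
    have := hcount _ (ZM_cons S hZM hw ho)
    simp at this
  refine ⟨q, fun k hk => (hq k hk).trans_le (by exact_mod_cast hle k), ?_, ?_⟩
  · intro x hx hxZ h0
    apply hbad x (regS_real S hx)
    rw [count_real_not_mem hxZ]
    have h0' : linForm S.μ S.e m 0 q (x : ℂ) = 0 := by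
      rw [← linForm_real, h0, Complex.ofReal_zero]
    exact_mod_cast one_le_order (linForm_analyticAt S q (regS_real S hx)) h0'
  · intro x hx
    have hxI := Ioo_subset_Icc_self (hZ hx)
    have han := linForm_analyticAt S q (regS_real S hxI)
    have hb := hbad x (regS_real S hxI)
    rw [count_real_mem hx] at hb
    have h1 := one_le_order han (hqZ x hx)
    have ho : analyticOrderAt (linForm S.μ S.e m 0 q) (x : ℂ) = (1 : ℕ) := by
      apply le_antisymm _ (by exact_mod_cast h1)
      have : analyticOrderAt (linForm S.μ S.e m 0 q) (x : ℂ) < ((1 + 1 : ℕ) : ℕ∞) := not_le.mp hb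
      exact Order.lt_add_one_iff_of_not_isMax (by simp) |>.mp (by exact_mod_cast this)
    have := real_factor (linForm_real S.μ S.e m 0 q) han ho
    simpa using this


lemma linForm_comb (μ : ℕ → Measure ℝ) (e : ℕ → ℝ) (m j : ℕ) (A A' : ℕ → ℝ[X]) (c d : ℝ) (z : ℂ) :
    linForm μ e m j (fun i => C c * A i + C d * A' i) z =
      (c : ℂ) * linForm μ e m j A z + (d : ℂ) * linForm μ e m j A' z := by
  unfold linForm
  rw [Finset.mul_sum, Finset.mul_sum, ← Finset.sum_add_distrib]
  refine Finset.sum_congr rfl fun k _ => ?_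
  simp only [map_add, map_mul, aeval_C, Complex.coe_algebraMap]
  ring

lemma base_interval {m₁ m₂ : ℕ} (S1 : NikSys m₁) (S2 : NikSys m₂) (h : S1.μ 0 = S2.μ 0) :
    S1.a 0 = S2.a 0 ∧ S1.b 0 = S2.b 0 := by
  have h1 := S1.hull 0 (Nat.zero_le _)
  have h2 := S2.hull 0 (Nat.zero_le _)
  rw [h, h2] at h1
  obtain ⟨x, hx⟩ := (S2.inf 0 (Nat.zero_le _)).nonempty
  have hx2 := nik_supp_sub S2 (Nat.zero_le _) hx
  have hx1 : x ∈ Icc (S1.a 0) (S1.b 0) := h1 ▸ hx2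
  have hl1 : S1.a 0 ≤ S1.b 0 := hx1.1.trans hx1.2
  have hl2 : S2.a 0 ≤ S2.b 0 := hx2.1.trans hx2.2
  have e1 : S1.a 0 ∈ Icc (S2.a 0) (S2.b 0) := by rw [h1]; exact left_mem_Icc.mpr hl1
  have e2 : S1.b 0 ∈ Icc (S2.a 0) (S2.b 0) := by rw [h1]; exact right_mem_Icc.mpr hl1
  have e3 : S2.a 0 ∈ Icc (S1.a 0) (S1.b 0) := by rw [← h1]; exact left_mem_Icc.mpr hl2
  have e4 : S2.b 0 ∈ Icc (S1.a 0) (S1.b 0) := by rw [← h1]; exact right_mem_Icc.mpr hl2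
  exact ⟨le_antisymm e3.1 e1.1, le_antisymm e2.2 e4.2⟩

lemma mop_orth {m₁ m₂ : ℕ} (S1 : NikSys m₁) (S2 : NikSys m₂) (hμ : S1.μ 0 = S2.μ 0)
    {n1 n2 : ℕ → ℕ} {A : ℕ → ℝ[X]} (hA : IsMOP m₁ m₂ S1 S2 n1 n2 A)
    (q : ℕ → ℝ[X]) (hq : ∀ k ≤ m₂, (q k).degree < (n2 k : WithBot ℕ)) :
    ∫ t, (linForm S1.μ S1.e m₁ 0 A ((t : ℝ) : ℂ)).re *
      (linForm S2.μ S2.e m₂ 0 q (t : ℂ)).re ∂(S2.μ 0) = 0 := by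
  have hab := base_interval S1 S2 hμ
  have := S2.fin 0
  have hnull := nik_null S2 (Nat.zero_le _)
  set f : ℝ → ℝ := fun t => (linForm S1.μ S1.e m₁ 0 A (t : ℂ)).re with hf
  have hfc : ContinuousOn f (Icc (S2.a 0) (S2.b 0)) := by
    have := linForm_contOn S1 0 A
    rw [hab.1, hab.2] at this
    exact Complex.continuous_re.comp_continuousOn this
  have hwc : ∀ k ≤ m₂, ContinuousOn (fun t : ℝ => (wt S2.μ S2.e 0 k (t : ℂ)).re)
      (Icc (S2.a 0) (S2.b 0)) := fun k hk =>
    Complex.continuous_re.comp_continuousOn (wt_contOn S2 (Nat.zero_le k) hk)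
  have hmon : ∀ k ≤ m₂, ∀ ν < n2 k,
      ∫ t, t ^ ν * (f t * (wt S2.μ S2.e 0 k (t : ℂ)).re) ∂(S2.μ 0) = 0 := by
    intro k hk ν hν
    have h := hA.2.2 k hk ν hν
    unfold sInt at h
    have he : (S2.e 0 : ℂ) ≠ 0 := by
      rcases S2.sgn 0 with h | h <;> rw [h] <;> simp
    have h := (mul_eq_zero.mp h).resolve_left he
    have h2 : ∀ t : ℝ, (t : ℂ) ^ ν * linForm S1.μ S1.e m₁ 0 A (t : ℂ) * wt S2.μ S2.e 0 k (t : ℂ) =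
        ((t ^ ν * (f t * (wt S2.μ S2.e 0 k (t : ℂ)).re) : ℝ) : ℂ) := by
      intro t
      push_cast
      rw [hf]
      simp only
      rw [linForm_real, wt_real]
      ring
    simp only [h2] at h
    rw [integral_complex_ofReal] at h
    exact_mod_cast h
  have hexp : ∀ t : ℝ, f t * (linForm S2.μ S2.e m₂ 0 q (t : ℂ)).re =
      ∑ k ∈ Finset.range (m₂ + 1), ∑ i ∈ (q k).support,
        (q k).coeff i * (t ^ i * (f t * (wt S2.μ S2.e 0 k (t : ℂ)).re)) := by
    intro t
    rw [linForm_re, Finset.mul_sum]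
    refine Finset.sum_congr rfl fun k _ => ?_
    rw [eval_eq_sum, Polynomial.sum, Finset.sum_mul, Finset.mul_sum]
    refine Finset.sum_congr rfl fun i _ => ?_
    ring
  have hintg : ∀ k ≤ m₂, ∀ i, Integrable (fun t : ℝ =>
      (q k).coeff i * (t ^ i * (f t * (wt S2.μ S2.e 0 k (t : ℂ)).re))) (S2.μ 0) := by
    intro k hk i
    apply intg_of_contOn hnull
    exact continuousOn_const.mul ((by fun_prop : Continuous fun t : ℝ => t ^ i).continuousOn.mul
      (hfc.mul (hwc k hk)))
  refine (integral_congr_ae (ae_of_all _ hexp)).trans ?_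
  rw [integral_finsetSum _ fun k hk => integrable_finsetSum _ fun i _ =>
    hintg k (Nat.lt_succ_iff.mp (Finset.mem_range.mp hk)) i]
  refine Finset.sum_eq_zero fun k hk => ?_
  have hk := Nat.lt_succ_iff.mp (Finset.mem_range.mp hk)
  rw [integral_finsetSum _ fun i _ => hintg k hk i]
  refine Finset.sum_eq_zero fun i hi => ?_
  rw [integral_const_mul, hmon k hk i, mul_zero]
  have := (le_degree_of_ne_zero (mem_support_iff.mp hi)).trans_lt (hq k hk)
  exact_mod_cast this

lemma first_step {m₁ m₂ : ℕ} (S1 : NikSys m₁) (S2 : NikSys m₂) (hμ : S1.μ 0 = S2.μ 0)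
    {n2 : ℕ → ℕ} (h2 : Decr m₂ n2) (g : ℕ → ℝ[X])
    (horth : ∀ q : ℕ → ℝ[X], (∀ k ≤ m₂, (q k).degree < (n2 k : WithBot ℕ)) →
      ∫ t, (linForm S1.μ S1.e m₁ 0 g ((t : ℝ) : ℂ)).re *
        (linForm S2.μ S2.e m₂ 0 q (t : ℂ)).re ∂(S2.μ 0) = 0)
    (hfin : {t ∈ Icc (S1.a 0) (S1.b 0) |
      (linForm S1.μ S1.e m₁ 0 g ((t : ℝ) : ℂ)).re = 0}.Finite) :
    ∃ T : Finset ℝ, ↑T ⊆ Ioo (S1.a 0) (S1.b 0) ∧ msum m₂ n2 ≤ T.card ∧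
      ∀ x ∈ T, SignChangeAt (fun t : ℝ => (linForm S1.μ S1.e m₁ 0 g (t : ℂ)).re) x := by
  have hab := base_interval S1 S2 hμ
  have := S2.fin 0
  have hfc := Complex.continuous_re.comp_continuousOn (linForm_contOn S1 0 g)
  rw [hab.1, hab.2] at hfin hfc ⊢
  refine many_sign_changes (nik_null S2 (Nat.zero_le _)) (nik_supp_sub S2 (Nat.zero_le _))
    (S2.inf 0 (Nat.zero_le _)) hfc hfin _ ?_
  intro Z hZ hcard
  obtain ⟨q, hq1, hq2, hq3⟩ := exists_Q S2 h2 Z hZ hcard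
  exact ⟨fun t => (linForm S2.μ S2.e m₂ 0 q (t : ℂ)).re,
    Complex.continuous_re.comp_continuousOn (linForm_contOn S2 0 q), hq2, hq3, horth q hq1⟩

lemma comb_orth {m₁ m₂ : ℕ} (S1 : NikSys m₁) (S2 : NikSys m₂) (hμ : S1.μ 0 = S2.μ 0)
    {n1 n2 n1' n2' : ℕ → ℕ} {A A' : ℕ → ℝ[X]} (hA : IsMOP m₁ m₂ S1 S2 n1 n2 A)
    (hA' : IsMOP m₁ m₂ S1 S2 n1' n2' A') (hle : ∀ k, n2 k ≤ n2' k) (c d : ℝ)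
    (q : ℕ → ℝ[X]) (hq : ∀ k ≤ m₂, (q k).degree < (n2 k : WithBot ℕ)) :
    ∫ t, (linForm S1.μ S1.e m₁ 0 (fun i => C c * A i + C d * A' i) ((t : ℝ) : ℂ)).re *
      (linForm S2.μ S2.e m₂ 0 q (t : ℂ)).re ∂(S2.μ 0) = 0 := by
  have e1 := mop_orth S1 S2 hμ hA q hq
  have e2 := mop_orth S1 S2 hμ hA' q
    (fun k hk => (hq k hk).trans_le (by exact_mod_cast hle k))
  have hab := base_interval S1 S2 hμ
  have := S2.fin 0
  have hi : ∀ B : ℕ → ℝ[X], Integrable (fun t : ℝ => (linForm S1.μ S1.e m₁ 0 B (t : ℂ)).re *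
      (linForm S2.μ S2.e m₂ 0 q (t : ℂ)).re) (S2.μ 0) := by
    intro B
    apply intg_of_contOn (nik_null S2 (Nat.zero_le _))
    have h1 := Complex.continuous_re.comp_continuousOn (linForm_contOn S1 0 B)
    rw [hab.1, hab.2] at h1
    exact h1.mul (Complex.continuous_re.comp_continuousOn (linForm_contOn S2 0 q))
  have h3 : ∀ t : ℝ, (linForm S1.μ S1.e m₁ 0 (fun i => C c * A i + C d * A' i) (t : ℂ)).re *
      (linForm S2.μ S2.e m₂ 0 q (t : ℂ)).re =
      c * ((linForm S1.μ S1.e m₁ 0 A (t : ℂ)).re * (linForm S2.μ S2.e m₂ 0 q (t : ℂ)).re) +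
      d * ((linForm S1.μ S1.e m₁ 0 A' (t : ℂ)).re * (linForm S2.μ S2.e m₂ 0 q (t : ℂ)).re) := by
    intro t
    rw [linForm_comb, Complex.add_re, Complex.re_ofReal_mul, Complex.re_ofReal_mul]
    ring
  simp only [h3]
  rw [integral_add ((hi A).const_mul c) ((hi A').const_mul d), integral_const_mul,
    integral_const_mul, e1, e2]
  simp


lemma czeros_of_ZM {m : ℕ} (S : NikSys m) (j : ℕ) (g : ℕ → ℝ[X]) (B : ℕ)
    (h : ∀ s, ZM S j g s → s.card < B) : CZerosLT (linForm S.μ S.e m j g) (regS S j) B := by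
  classical
  intro T ord hT h0
  have key := h (∑ x ∈ T, Multiset.replicate (ord x) x) ?_
  · rw [Multiset.card_sum] at key
    simpa using key
  have hcount : ∀ w, (∑ x ∈ T, Multiset.replicate (ord x) x).count w = if w ∈ T then ord w else 0 := by
    intro w
    rw [Multiset.count_sum']
    simp [Multiset.count_replicate]
  have hmem : ∀ w ∈ (∑ x ∈ T, Multiset.replicate (ord x) x), w ∈ T := by
    intro w hw
    by_contra hcon
    have := hcount w
    rw [if_neg hcon, Multiset.count_eq_zero] at this
    exact this hw
  refine ⟨fun w hw => hT (hmem w hw), fun w hw => ?_⟩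
  rw [hcount, if_pos (hmem w hw), natCast_le_analyticOrderAt_iff_iteratedDeriv_eq_zero
    (linForm_analyticAt S g (hT (hmem w hw)))]
  exact h0 w (hmem w hw)

lemma not_signChange_sq (x : ℝ) : ¬ SignChangeAt (fun t : ℝ => (t - x) ^ 2) x := by
  intro h
  obtain ⟨u, v, _, _, huv⟩ := h 1 one_pos
  have : 0 ≤ (u - x) ^ 2 * (v - x) ^ 2 := by positivity
  simp only at huv
  linarith

lemma simple_real {m : ℕ} (S : NikSys m) {j : ℕ} (g : ℕ → ℝ[X]) (B : ℕ)
    (hB : ∀ s, ZM S j g s → s.card < B) (T : Finset ℝ)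
    (hT : ↑T ⊆ Ioo (S.a j) (S.b j))
    (hsc : ∀ x ∈ T, SignChangeAt (fun t : ℝ => (linForm S.μ S.e m j g (t : ℂ)).re) x)
    (hcard : B ≤ T.card + 2) {z : ℂ} (hz : z ∈ regS S j) (h0 : linForm S.μ S.e m j g z = 0) :
    z.im = 0 ∧ deriv (linForm S.μ S.e m j g) z ≠ 0 := by
  have hZM := ZM_of_signChanges S g T hT hsc
  have han := linForm_analyticAt S g hz
  have him : z.im = 0 := by
    by_contra him
    have hc1 : ∀ w : ℂ, w.im ≠ 0 → (T.val.map (fun x : ℝ => (x : ℂ))).count w = 0 := by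
      intro w hw
      apply Multiset.count_eq_zero_of_notMem
      intro h
      obtain ⟨y, hy, rfl⟩ := Multiset.mem_map.mp h
      exact hw (Complex.ofReal_im y)
    have hz' := regS_conj S hz
    have h0' : linForm S.μ S.e m j g (conj z) = 0 := by rw [linForm_conj, h0, map_zero]
    have hne : z ≠ conj z := by
      intro h
      have := congrArg Complex.im h
      rw [Complex.conj_im] at this
      apply him
      linarith
    have z1 : ZM S j g (conj z ::ₘ T.val.map (fun x : ℝ => (x : ℂ))) := by
      refine ZM_cons S hZM hz' ?_
      rw [hc1 _ (by rw [Complex.conj_im]; exact neg_ne_zero.mpr him)]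
      exact_mod_cast one_le_order (linForm_analyticAt S g hz') h0'
    have z2 : ZM S j g (z ::ₘ conj z ::ₘ T.val.map (fun x : ℝ => (x : ℂ))) := by
      refine ZM_cons S z1 hz ?_
      rw [Multiset.count_cons_of_ne hne, hc1 _ him]
      exact_mod_cast one_le_order han h0
    have := hB _ z2
    simp at this
    omega
  refine ⟨him, fun hd => ?_⟩
  obtain ⟨x, rfl⟩ : ∃ x : ℝ, (x : ℂ) = z := ⟨z.re, Complex.ext (by simp) (by simp [him])⟩
  have ho2 : ((2 : ℕ) : ℕ∞) ≤ analyticOrderAt (linForm S.μ S.e m j g) (x : ℂ) := by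
    rw [natCast_le_analyticOrderAt_iff_iteratedDeriv_eq_zero han]
    intro i hi
    interval_cases i
    · simpa using h0
    · rw [iteratedDeriv_one]; exact hd
  have ho : (((T.val.map (fun x : ℝ => (x : ℂ))).count (x : ℂ) + 1 + 1 : ℕ) : ℕ∞) ≤
      analyticOrderAt (linForm S.μ S.e m j g) (x : ℂ) := by
    by_cases hx : x ∈ T
    · rw [count_real_mem hx]
      have hne : analyticOrderAt (linForm S.μ S.e m j g) (x : ℂ) ≠ ((2 : ℕ) : ℕ∞) := by
        intro heq
        obtain ⟨u, hu, hu0, hev⟩ := real_factor (linForm_real S.μ S.e m j g) han heq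
        exact not_signChange_sq x (signChange_mul_cont hu hu0 (signChange_congr hev (hsc x hx)))
      have := Order.add_one_le_of_lt (lt_of_le_of_ne ho2 hne.symm)
      exact_mod_cast this
    · rw [count_real_not_mem hx]
      exact_mod_cast ho2
  have z1 := ZM_cons S hZM hz (le_trans (by exact_mod_cast Nat.le_succ _) ho)
  have z2 := ZM_cons S z1 hz (by rw [Multiset.count_cons_self]; exact ho)
  have := hB _ z2
  simp at this
  omega

/-- Coefficients with index above the last nonvanishing form are zero. -/
lemma coeff_zero_above {m : ℕ} (S : NikSys m) {k : ℕ} (g : ℕ → ℝ[X]) (N : ℕ → ℕ)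
    (hdeg : ∀ i ≤ m, (g i).degree < (N i : WithBot ℕ)) (hN : Decr m N)
    (hk : ∀ j, k < j → j ≤ m → ∀ z ∈ regS S j, linForm S.μ S.e m j g z = 0) :
    ∀ i, k < i → i ≤ m → g i = 0 := by
  intro i hki him
  by_contra hne
  have hc := zero_count S (m - i) i (by omega) g N (fun i' _ h => hdeg i' h)
    (fun i1 i2 _ h1 h2 => decr_anti hN i1 i2 h1 h2) ⟨i, le_rfl, him, hne⟩
  have hf := real_zeros_finite S i g _ hc
  obtain hinf := S.inf i him
  apply hinf
  refine hf.subset fun t ht => ⟨nik_supp_sub S him ht, ?_⟩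
  rw [hk i hki him _ (regS_real S (nik_supp_sub S him ht)), Complex.zero_re]

lemma tailSum_succ {m : ℕ} (n : ℕ → ℕ) {j : ℕ} (hj : j ≤ m) :
    tailSum m n j = n j + tailSum m n (j + 1) := by
  unfold tailSum
  rw [← Finset.add_sum_Ioc_eq_sum_Icc (f := n) hj]
  congr 1
  exact Finset.sum_congr (by ext; simp) fun _ _ => rfl

lemma tailSum_bump_le {m l : ℕ} (n : ℕ → ℕ) {j : ℕ} (hj : j ≤ l) (hl : l ≤ m) :
    ∑ i ∈ Finset.Icc j m, bump l n i = tailSum m n j + 1 := by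
  have : ∀ i, bump l n i = n i + if i = l then 1 else 0 := by
    intro i; unfold bump; split_ifs <;> simp
  simp only [this, Finset.sum_add_distrib, tailSum, Finset.sum_ite_eq', Finset.mem_Icc]
  simp [hj, hl]

lemma tailSum_bump_gt {m l : ℕ} (n : ℕ → ℕ) {j : ℕ} (hj : l < j) :
    ∑ i ∈ Finset.Icc j m, bump l n i = tailSum m n j := by
  refine Finset.sum_congr rfl fun i hi => ?_
  have := (Finset.mem_Icc.mp hi).1
  unfold bump
  rw [if_neg (by omega)]

lemma tailSum_zero (m : ℕ) (n : ℕ → ℕ) : tailSum m n 0 = msum m n :=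
  Finset.sum_congr (by ext; simp) fun _ _ => rfl


end Helpers

/-- Let `k` be the largest index with `𝒢_{n,k} ≢ 0`.  Then `k ≥ l₁`;
for `j ≤ l₁` the form `𝒢_{n,j}` has at most `N_{1,j}` zeros in `ℂ ∖ Δ¹_{j+1}` and at
least `N_{1,j} - 1` sign changes in the interior of `Δ¹_j`; for `l₁ < j ≤ k` it has at
most `N_{1,j} - 1` zeros and at least `N_{1,j} - 2` sign changes; in particular all its
zeros in `ℂ ∖ Δ¹_{j+1}` are real and simple. -/
theorem combination_zero_structure
    (m₁ m₂ : ℕ) (S1 : NikSys m₁) (S2 : NikSys m₂)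
    (hbase : S1.μ 0 = S2.μ 0 ∧ S1.e 0 = S2.e 0)
    (n1 n2 : ℕ → ℕ) (l₁ l₂ : ℕ) (hl₁ : l₁ ≤ m₁) (hl₂ : l₂ ≤ m₂)
    (h1 : Decr m₁ n1) (h2 : Decr m₂ n2)
    (h1l : Decr m₁ (bump l₁ n1)) (h2l : Decr m₂ (bump l₂ n2))
    (hsum : msum m₂ n2 + 1 = msum m₁ n1) (hlast : 1 ≤ n1 m₁)
    (A A' : ℕ → Polynomial ℝ)
    (hA : IsMOP m₁ m₂ S1 S2 n1 n2 A) (hAm : MonicLast m₁ A)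
    (hA' : IsMOP m₁ m₂ S1 S2 (bump l₁ n1) (bump l₂ n2) A') (hA'm : MonicLast m₁ A')
    (c d : ℝ) (hcd : 0 < |c| + |d|)
    -- the region `ℂ ∖ Δ¹_{j+1}` and the form `𝒢_{n,j}`:
    (reg : ℕ → Set ℂ)
    (hreg : ∀ j, reg j = if j < m₁ then (cpx (Set.Icc (S1.a (j+1)) (S1.b (j+1))))ᶜ
      else (Set.univ : Set ℂ))
    (G : ℕ → ℂ → ℂ)
    (hG : ∀ j, G j = fun z => (c : ℂ) * linForm S1.μ S1.e m₁ j A z +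
      (d : ℂ) * linForm S1.μ S1.e m₁ j A' z)
    -- `k` is the largest index `k' ≤ m₁` with `𝒢_{n,k'} ≢ 0`:
    (k : ℕ) (hk : k ≤ m₁)
    (hknz : ∃ z ∈ reg k, G k z ≠ 0)
    (hkmax : ∀ j, k < j → j ≤ m₁ → ∀ z ∈ reg j, G j z = 0) :
    l₁ ≤ k ∧
    (∀ j ≤ l₁,
      CZerosLE (G j) (reg j) (tailSum m₁ n1 j) ∧
      ∃ S : Finset ℝ, ↑S ⊆ Set.Ioo (S1.a j) (S1.b j) ∧
        tailSum m₁ n1 j - 1 ≤ S.card ∧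
        ∀ x ∈ S, SignChangeAt (fun t : ℝ => (G j (t : ℂ)).re) x) ∧
    (∀ j, l₁ < j → j ≤ k →
      CZerosLT (G j) (reg j) (tailSum m₁ n1 j) ∧
      ∃ S : Finset ℝ, ↑S ⊆ Set.Ioo (S1.a j) (S1.b j) ∧
        tailSum m₁ n1 j - 2 ≤ S.card ∧
        ∀ x ∈ S, SignChangeAt (fun t : ℝ => (G j (t : ℂ)).re) x) ∧
    (∀ j ≤ k, ∀ z ∈ reg j, G j z = 0 → z.im = 0 ∧ deriv (G j) z ≠ 0) := by
  classical
  set g : ℕ → ℝ[X] := fun i => C c * A i + C d * A' i with hg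
  have hreg' : ∀ j, reg j = regS S1 j := fun j => by rw [hreg j]; rfl
  have hG' : ∀ j, G j = linForm S1.μ S1.e m₁ j g := by
    intro j
    rw [hG j]
    funext z
    rw [hg, linForm_comb]
  simp only [hreg', hG'] at hknz hkmax ⊢
  have hbump : ∀ (l : ℕ) (n : ℕ → ℕ) i, n i ≤ bump l n i := by
    intro l n i; unfold bump; split_ifs <;> omega
  have hdeg : ∀ i ≤ m₁, (g i).degree < (bump l₁ n1 i : WithBot ℕ) := by
    intro i hi
    have e1 : (A i).degree < (bump l₁ n1 i : WithBot ℕ) :=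
      (hA.1 i hi).trans_le (by exact_mod_cast hbump l₁ n1 i)
    have e2 := hA'.1 i hi
    refine lt_of_le_of_lt (degree_add_le _ _) (max_lt ?_ ?_)
    · rw [C_mul']; exact lt_of_le_of_lt (degree_smul_le _ _) e1
    · rw [C_mul']; exact lt_of_le_of_lt (degree_smul_le _ _) e2
  have hzero := coeff_zero_above S1 g _ hdeg h1l hkmax
  have hgk : g k ≠ 0 := by
    intro h0
    obtain ⟨z, hz, hne⟩ := hknz
    apply hne
    rw [linForm_top S1 k hk g hzero, h0, map_zero]
  have hcount : ∀ j ≤ k, ∀ s, ZM S1 j g s → s.card < ∑ i ∈ Finset.Icc j m₁, bump l₁ n1 i := by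
    intro j hj
    exact zero_count S1 (m₁ - j) j (by omega) g _ (fun i _ h => hdeg i h)
      (fun i i' _ h1 h2 => decr_anti h1l i i' h1 h2) ⟨k, hj, hk, hgk⟩
  have hn1pos : ∀ i ≤ m₁, 1 ≤ n1 i := fun i hi => hlast.trans (decr_anti h1 i m₁ hi le_rfl)
  -- sign changes of the zeroth form
  have hfirst := first_step S1 S2 hbase.1 h2 g
    (comb_orth S1 S2 hbase.1 hA hA' (hbump l₂ n2) c d)
    (real_zeros_finite S1 0 g _ (hcount 0 (Nat.zero_le _)))
  have hlk : l₁ ≤ k := by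
    by_contra hcon
    push Not at hcon
    obtain ⟨T, hT, hTc, hTs⟩ := hfirst
    have hN := zero_count S1 m₁ 0 (by omega) g (fun i => if i ≤ k then n1 i else 0) ?_ ?_
      ⟨k, Nat.zero_le _, hk, hgk⟩ _ (ZM_of_signChanges S1 g T hT hTs)
    · rw [Multiset.card_map, Finset.card_val] at hN
      have hlt : ∑ i ∈ Finset.Icc 0 m₁, (if i ≤ k then n1 i else 0) < ∑ i ∈ Finset.Icc 0 m₁, n1 i := by
        apply Finset.sum_lt_sum
        · intro i _; split_ifs <;> omega
        · refine ⟨l₁, Finset.mem_Icc.mpr ⟨Nat.zero_le _, hl₁⟩, ?_⟩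
          rw [if_neg (by omega)]
          exact hn1pos l₁ hl₁
      have h3 := tailSum_zero m₁ n1
      unfold tailSum at h3
      omega
    · intro i _ hi
      by_cases hik : i ≤ k
      · have := hdeg i hi
        have hb : bump l₁ n1 i = n1 i := by unfold bump; rw [if_neg (by omega)]
        rw [hb] at this
        simpa [hik] using this
      · rw [hzero i (by omega) hi, degree_zero]
        exact WithBot.bot_lt_coe _
    · intro i i' _ hii hi'
      have := decr_anti h1 i i' hii hi'
      split_ifs <;> omega
  have htail : ∀ j ≤ m₁, tailSum m₁ n1 j = n1 j + tailSum m₁ n1 (j + 1) :=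
    fun j hj => tailSum_succ n1 hj
  -- propagation of the sign changes
  have hchain : ∀ j ≤ k, ∃ T : Finset ℝ, ↑T ⊆ Set.Ioo (S1.a j) (S1.b j) ∧
      (if j ≤ l₁ then tailSum m₁ n1 j - 1 else tailSum m₁ n1 j - 2) ≤ T.card ∧
      ∀ x ∈ T, SignChangeAt (fun t : ℝ => (linForm S1.μ S1.e m₁ j g (t : ℂ)).re) x := by
    intro j
    induction j with
    | zero =>
      intro _
      obtain ⟨T, hT, hTc, hTs⟩ := hfirst
      refine ⟨T, hT, ?_, hTs⟩
      rw [if_pos (Nat.zero_le _), tailSum_zero]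
      omega
    | succ j ih =>
      intro hj
      obtain ⟨T, hT, hTc, hTs⟩ := ih (by omega)
      obtain ⟨T', hT', hTc', hTs'⟩ := step_lemma S1 (j := j) (by omega) g (bump l₁ n1 j)
        (fun i hi him => (hdeg i him).trans_le
          (by exact_mod_cast decr_anti h1l j i hi him))
        _ (ZM_of_signChanges S1 g T hT hTs)
        (by rw [Multiset.map_map]; exact Multiset.map_congr rfl fun x _ => Complex.conj_ofReal x)
        (real_zeros_finite S1 (j + 1) g _ (hcount (j + 1) hj))
      refine ⟨T', hT', ?_, hTs'⟩
      refine le_trans ?_ hTc'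
      rw [Multiset.card_map, Finset.card_val]
      have ht := htail j (by omega)
      unfold bump
      split_ifs at hTc ⊢ <;> omega
  have htailpos : ∀ j ≤ m₁, 1 ≤ tailSum m₁ n1 j := by
    intro j hj
    have e1 := htail j hj
    have e2 := hn1pos j hj
    omega
  refine ⟨hlk, ?_, ?_, ?_⟩
  · intro j hj
    refine ⟨?_, ?_⟩
    · have hc := hcount j (by omega)
      rw [tailSum_bump_le n1 hj hl₁] at hc
      intro T ord hT h0
      exact Nat.lt_succ_iff.mp (czeros_of_ZM S1 j g _ hc T ord hT h0)
    · have := hchain j (by omega)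
      rwa [if_pos hj] at this
  · intro j hlj hj
    refine ⟨?_, ?_⟩
    · have hc := hcount j hj
      rw [tailSum_bump_gt n1 hlj] at hc
      exact czeros_of_ZM S1 j g _ hc
    · have := hchain j hj
      rwa [if_neg (by omega)] at this
  · intro j hj z hz h0
    obtain ⟨T, hT, hTc, hTs⟩ := hchain j hj
    refine simple_real S1 g _ (hcount j hj) T hT hTs ?_ hz h0
    have hpos := htailpos j (by omega)
    by_cases hjl : j ≤ l₁
    · rw [if_pos hjl] at hTc
      rw [tailSum_bump_le n1 hjl hl₁]
      omega
    · rw [if_neg hjl] at hTc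
      rw [tailSum_bump_gt n1 (by omega)]
      omega

end
end
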